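/- arXiv:1612.04716 — 2 statements merged into one kernel-verified Lean document; each statement's English description precedes it below -/
import Mathlib

section
/- Let Γ be a strongly connected countable directed graph with potential F : Γ_Ar → ℝ such that every loop in Γ has an exit. Assume that either (a) there is a loop μ in Γ with F(μ) = 0, or (b) there are loops μ₁, μ₂ in Γ with F(μ₁) < 0 < F(μ₂). Then for every β ∈ ℝ and every vertex v ∈ Γ_V, limsup_{n→∞} (A(β)^n_{v,v})^{1/n} > 1. -/
/-!
Fix `β`. In either case some loop `μ` has `β F(μ) ≤ 0`, i.e. weight `e^{-βF(μ)} ≥ 1`: in case (b)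
take `μ₁` or `μ₂` according to the sign of `β`. Rotate `μ` so that it starts at a vertex `u` emitting
two arrows, with first arrow `a`, and complete an arrow `b ≠ a` with source `u` to a loop `ν` at `u`.
The loops `μ^{|ν|}` and `ν^{|μ|}` at `u` have the same length `N = |μ||ν|` and different first
arrows, so `A(β)^N_{u,u} ≥ e^{-βF(μ)|ν|} + e^{-βF(ν)|μ|} > 1` (`exists_one_lt_Apow`).

Powers are supermultiplicative, `M^{m+n}_{v,w} ≥ M^m_{v,u} M^n_{u,w}` (`matPow_mul_le`). Passing from
`v` to `u`, going `k` times around and returning shows that `A(β)^n_{v,v} > 1` for some `n`, and then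
`A(β)^{jn}_{v,v} ≥ (A(β)^n_{v,v})^j` for all `j` keeps the upper limit of the roots above `1`
(`one_lt_limsup`).
-/

open MeasureTheory Filter Topology
open scoped ENNReal NNReal

namespace GraphKMS

variable {V A : Type}

/-- The space `P(Γ)` of infinite paths of a directed graph with vertex set `V`,
arrow set `A`, source map `s` and range map `r`. -/
structure PathSpace (s r : A → V) : Type where
  seq : ℕ → A
  compat : ∀ i, r (seq i) = s (seq (i + 1))

/-- The Borel σ-algebra of `P(Γ)`, i.e. the trace on `P(Γ)` of the Borel σ-algebra of the
product `A^ℕ` with `A` discrete. -/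
instance (s r : A → V) : MeasurableSpace (PathSpace s r) :=
  MeasurableSpace.comap (fun p => p.seq) (@MeasurableSpace.pi ℕ (fun _ => A) (fun _ => ⊤))

/-- The shift map `σ`. -/
def shift (s r : A → V) (p : PathSpace s r) : PathSpace s r :=
  ⟨fun i => p.seq (i + 1), fun i => p.compat (i + 1)⟩

/-- The cylinder set `Z(v)` of a vertex. -/
def cylV (s r : A → V) (v : V) : Set (PathSpace s r) := {p | s (p.seq 0) = v}

/-- The cylinder set `Z(a)` of an arrow. -/
def cylA (s r : A → V) (a : A) : Set (PathSpace s r) := {p | p.seq 0 = a}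

/-- A finite path: a source vertex together with a compatible list of arrows.
The empty list corresponds to the path of length `0` given by the vertex `src`. -/
structure FinPath (s r : A → V) : Type where
  src : V
  arrows : List A
  head_src : ∀ h : arrows ≠ [], s (arrows.head h) = src
  chain : arrows.Chain' (fun a b => r a = s b)

/-- The range `r(μ)` of a finite path. -/
def finRng (s r : A → V) (μ : FinPath s r) : V :=
  match μ.arrows.getLast? with
  | none => μ.src
  | some a => r a

/-- The additive extension `F(μ)` of a potential to finite paths. -/
def finWt (s r : A → V) (F : A → ℝ) (μ : FinPath s r) : ℝ := (μ.arrows.map F).sum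

/-- The cylinder set `Z(μ)` of a finite path. -/
def finCyl (s r : A → V) (μ : FinPath s r) : Set (PathSpace s r) :=
  {p | s (p.seq 0) = μ.src ∧ ∀ i : Fin μ.arrows.length, p.seq i.1 = μ.arrows.get i}

/-- The set of vertices occurring in a finite path. -/
def finVerts (s r : A → V) (μ : FinPath s r) : Set V :=
  {μ.src} ∪ {v | ∃ a ∈ μ.arrows, s a = v ∨ r a = v}

/-- The entries of the matrix `A(β)`. -/
noncomputable def Amat (s r : A → V) (F : A → ℝ) (β : ℝ) (v w : V) : ℝ≥0∞ :=
  ∑' a : {a : A // s a = v ∧ r a = w}, ENNReal.ofReal (Real.exp (-(β * F a.1)))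

/-- Powers of a `[0,∞]`-valued matrix. -/
noncomputable def matPow (M : V → V → ℝ≥0∞) : ℕ → V → V → ℝ≥0∞
  | 0 => fun v w => ({v} : Set V).indicator (fun _ => (1 : ℝ≥0∞)) w
  | n + 1 => fun v w => ∑' u : V, M v u * matPow M n u w

/-- The entries of `A(β)ⁿ`. -/
noncomputable def Apow (s r : A → V) (F : A → ℝ) (β : ℝ) (n : ℕ) (v w : V) : ℝ≥0∞ :=
  matPow (Amat s r F β) n v w

/-- The Green function `Σₙ A(β)ⁿ_{v,w}`. -/
noncomputable def Green (s r : A → V) (F : A → ℝ) (β : ℝ) (v w : V) : ℝ≥0∞ :=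
  ∑' n : ℕ, Apow s r F β n v w

/-- The Martin kernel `K_β(v,w)` with base point `v₀`. -/
noncomputable def MartinK (s r : A → V) (F : A → ℝ) (β : ℝ) (v₀ v w : V) : ℝ≥0∞ :=
  Green s r F β v w / Green s r F β v₀ w

/-- A harmonic vector for a `[0,∞]`-valued matrix: a nonzero, finite-valued,
nonnegative vector fixed by the matrix. -/
def IsHarmonic (M : V → V → ℝ≥0∞) (ψ : V → ℝ≥0∞) : Prop :=
  ψ ≠ 0 ∧ (∀ v, ψ v ≠ ∞) ∧ ∀ v, (∑' w : V, M v w * ψ w) = ψ v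

/-- A minimal harmonic vector. -/
def IsMinimalHarmonic (M : V → V → ℝ≥0∞) (ψ : V → ℝ≥0∞) : Prop :=
  IsHarmonic M ψ ∧ ∀ φ : V → ℝ≥0∞, IsHarmonic M φ → (∀ v, φ v ≤ ψ v) →
    ∃ c : ℝ≥0, 0 < c ∧ ∀ v, φ v = (c : ℝ≥0∞) * ψ v

/-- An `e^{βF}`-conformal measure: a nonzero Borel measure which is finite on the
cylinders of vertices and satisfies `m(σ(B ∩ Z(a))) = e^{βF(a)} m(B ∩ Z(a))`. -/
def Conformal (s r : A → V) (F : A → ℝ) (β : ℝ) (m : Measure (PathSpace s r)) : Prop :=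
  m ≠ 0 ∧ (∀ v : V, m (cylV s r v) ≠ ∞) ∧
    ∀ (a : A) (B : Set (PathSpace s r)), MeasurableSet B →
      m (shift s r '' (B ∩ cylA s r a)) =
        ENNReal.ofReal (Real.exp (β * F a)) * m (B ∩ cylA s r a)

/-- An extremal conformal measure: every conformal measure dominated by it is a
positive scalar multiple of it. -/
def ExtremalConformal (s r : A → V) (F : A → ℝ) (β : ℝ) (m : Measure (PathSpace s r)) : Prop :=
  Conformal s r F β m ∧ ∀ m' : Measure (PathSpace s r), Conformal s r F β m' →
    (∀ B : Set (PathSpace s r), MeasurableSet B → m' B ≤ m B) →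
    ∃ c : ℝ≥0, 0 < c ∧ m' = (c : ℝ≥0∞) • m

/-- A wandering path: its vertices leave every finite set of vertices. -/
def Wandering (s r : A → V) (p : PathSpace s r) : Prop :=
  ∀ F₀ : Finset V, ∃ N : ℕ, ∀ i, N ≤ i → s (p.seq i) ∉ F₀

/-- A ray: an infinite path with pairwise distinct vertices. -/
def IsRay (s r : A → V) (p : PathSpace s r) : Prop :=
  Function.Injective fun i => s (p.seq i)

/-- The relation `p → q` between (wandering) paths. -/
def Leads (s r : A → V) (p q : PathSpace s r) : Prop :=
  ∀ (F₀ : Finset V) (N : ℕ), ∃ n₁ n₂ : ℕ, N ≤ n₁ ∧ N ≤ n₂ ∧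
    ∃ μ : FinPath s r, μ.src = s (p.seq n₁) ∧ finRng s r μ = s (q.seq n₂) ∧
      ∀ v ∈ finVerts s r μ, v ∉ F₀

/-- Nonempty path lists from `v` to `w`. -/
def IsPathList (s r : A → V) (l : List A) (v w : V) : Prop :=
  l ≠ [] ∧ l.Chain' (fun a b => r a = s b) ∧
    (∀ h : l ≠ [], s (l.head h) = v) ∧ ∀ h : l ≠ [], r (l.getLast h) = w

/-- The set `L_j(y)` (zero-indexed in `j`). -/
def Lset (s r : A → V) (p : PathSpace s r) (j : ℕ) : Set (List A) :=
  {l | IsPathList s r l (s (p.seq j)) (s (p.seq (j + 1))) ∧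
    ∀ a ∈ l, ∀ i ≤ j, r a ≠ s (p.seq i)}

/-- The sum `Σ_{μ ∈ L_j(y)} e^{-βF(μ)}`. -/
noncomputable def LSum (s r : A → V) (F : A → ℝ) (β : ℝ) (p : PathSpace s r) (j : ℕ) : ℝ≥0∞ :=
  ∑' l : Lset s r p j, ENNReal.ofReal (Real.exp (-(β * (l.1.map F).sum)))

/-- The product `𝕎(y[1,k+1[)` (zero-indexed: the product of the first `k` level sums). -/
noncomputable def Wprod (s r : A → V) (F : A → ℝ) (β : ℝ) (p : PathSpace s r) (k : ℕ) : ℝ≥0∞ :=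
  ∏ j ∈ Finset.range k, LSum s r F β p j

/-- `𝕍_β(v,y)`: the limit of the nondecreasing sequence of quotients. -/
noncomputable def Vbeta (s r : A → V) (F : A → ℝ) (β : ℝ) (v : V) (p : PathSpace s r) : ℝ≥0∞ :=
  Filter.limsup (fun k => Green s r F β v (s (p.seq k)) / Wprod s r F β p k) Filter.atTop

/-- `B_k(y)` (zero-indexed in `k`). -/
def Bset (s r : A → V) (p : PathSpace s r) (k : ℕ) : Set (PathSpace s r) :=
  {x | s (x.seq 0) = s (p.seq k) ∧ ∀ i, 1 ≤ i → ∀ j ≤ k, s (x.seq i) ≠ s (p.seq j)}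

/-- `𝔹_k(y)` (zero-indexed in `k`). -/
def BBset (s r : A → V) (p : PathSpace s r) (k : ℕ) : Set (PathSpace s r) :=
  Bset s r p k ∩ ⋂ (j : ℕ) (_ : k + 1 ≤ j), ⋃ i : ℕ, (shift s r)^[i] ⁻¹' Bset s r p j

/-- `𝔹(y)`. -/
def BB (s r : A → V) (p : PathSpace s r) : Set (PathSpace s r) :=
  ⋃ (n : ℕ) (k : ℕ), (shift s r)^[n] ⁻¹' ((shift s r)^[k] '' BBset s r p 0)

/-- A simple path from `v` to `w`: no arrow except possibly the last one has range `w`. -/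
def IsSimplePath (s r : A → V) (v w : V) (l : List A) : Prop :=
  IsPathList s r l v w ∧ ∀ a ∈ l.dropLast, r a ≠ w

/-- `R_{βF}(v,w)`: the sum of `e^{-βF(ν)}` over all simple paths `ν` from `v` to `w`. -/
noncomputable def Rsum (s r : A → V) (F : A → ℝ) (β : ℝ) (v w : V) : ℝ≥0∞ :=
  ∑' l : {l : List A // IsSimplePath s r v w l},
    ENNReal.ofReal (Real.exp (-(β * (l.1.map F).sum)))

open Classical in
/-- The restriction of a matrix to a subset of the index set (extended by `0`). -/
noncomputable def restrMat (M : V → V → ℝ≥0∞) (S : Set V) (v w : V) : ℝ≥0∞ :=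
  if v ∈ S ∧ w ∈ S then M v w else 0

/-- A loop: a nonempty path list whose range equals its source. -/
def IsLoop (s r : A → V) (l : List A) : Prop :=
  l ≠ [] ∧ l.Chain' (fun a b => r a = s b) ∧
    ∀ h : l ≠ [], r (l.getLast h) = s (l.head h)

/-! ### Walks and their weights -/

/-- `IsWalk s r l v w`: the list of arrows `l`, possibly empty, is a path from `v` to `w`. -/
def IsWalk (s r : A → V) : List A → V → V → Prop
  | [], v, w => v = w
  | a :: l, v, w => s a = v ∧ IsWalk s r l (r a) w

/-- The weight `e^{-βF(l)}` of a list of arrows. -/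
noncomputable def wt (F : A → ℝ) (β : ℝ) (l : List A) : ℝ≥0∞ :=
  ENNReal.ofReal (Real.exp (-(β * (l.map F).sum)))

theorem wt_nil (F : A → ℝ) (β : ℝ) : wt F β [] = 1 := by
  simp [wt]

theorem wt_cons (F : A → ℝ) (β : ℝ) (a : A) (l : List A) :
    wt F β (a :: l) = ENNReal.ofReal (Real.exp (-(β * F a))) * wt F β l := by
  rw [wt, wt, ← ENNReal.ofReal_mul (Real.exp_pos _).le, ← Real.exp_add, List.map_cons,
    List.sum_cons]
  congr 2
  ring

theorem wt_pos (F : A → ℝ) (β : ℝ) (l : List A) : 0 < wt F β l :=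
  ENNReal.ofReal_pos.2 (Real.exp_pos _)

theorem one_le_wt {F : A → ℝ} {β : ℝ} {l : List A} (h : β * (l.map F).sum ≤ 0) :
    1 ≤ wt F β l := by
  rw [wt, ENNReal.one_le_ofReal, Real.one_le_exp_iff]
  linarith

theorem IsWalk.append {s r : A → V} : ∀ {l₁ l₂ : List A} {u v w : V},
    IsWalk s r l₁ u v → IsWalk s r l₂ v w → IsWalk s r (l₁ ++ l₂) u w
  | [], _, _, _, _, h₁, h₂ => by cases h₁; exact h₂
  | _ :: _, _, _, _, _, h₁, h₂ => ⟨h₁.1, h₁.2.append h₂⟩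

theorem IsWalk.of_append_cons {s r : A → V} {a : A} {l₂ : List A} :
    ∀ {l₁ : List A} {v w : V}, IsWalk s r (l₁ ++ a :: l₂) v w →
      IsWalk s r l₁ v (s a) ∧ IsWalk s r (a :: l₂) (s a) w
  | [], _, _, h => ⟨h.1.symm, rfl, h.2⟩
  | _ :: _, _, _, h =>
    have ih := IsWalk.of_append_cons h.2
    ⟨⟨h.1, ih.1⟩, ih.2⟩

theorem isWalk_of_chain {s r : A → V} : ∀ (l : List A) (h : l ≠ []),
    l.IsChain (fun a b => r a = s b) → IsWalk s r l (s (l.head h)) (r (l.getLast h))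
  | [], h, _ => absurd rfl h
  | [_], _, _ => ⟨rfl, rfl⟩
  | a :: b :: l, _, hc => by
    rw [List.isChain_cons_cons] at hc
    have ih := isWalk_of_chain (b :: l) (List.cons_ne_nil _ _) hc.2
    refine ⟨rfl, ?_⟩
    rw [List.getLast_cons (List.cons_ne_nil _ _), hc.1]
    exact ih

theorem IsPathList.isWalk {s r : A → V} {l : List A} {v w : V} (h : IsPathList s r l v w) :
    IsWalk s r l v w := by
  have := isWalk_of_chain l h.1 h.2.1
  rwa [h.2.2.1 h.1, h.2.2.2 h.1] at this

theorem IsLoop.isWalk {s r : A → V} {l : List A} (h : IsLoop s r l) :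
    ∃ v, IsWalk s r l v v := by
  have := isWalk_of_chain l h.1 h.2.1
  rw [h.2.2 h.1] at this
  exact ⟨_, this⟩

/-! ### Lower bounds for matrix powers -/

theorem matPow_zero_self (M : V → V → ℝ≥0∞) (v : V) : matPow M 0 v v = 1 := by
  simp [matPow]

theorem matPow_mul_le (M : V → V → ℝ≥0∞) (m n : ℕ) (u v w : V) :
    matPow M m u v * matPow M n v w ≤ matPow M (m + n) u w := by
  induction m generalizing u with
  | zero =>
    by_cases h : v = u
    · subst h; simp [matPow]
    · simp [matPow, h]
  | succ m ih =>
    rw [Nat.succ_add]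
    simp only [matPow]
    rw [← ENNReal.tsum_mul_right]
    refine ENNReal.tsum_le_tsum fun x => ?_
    rw [mul_assoc]
    gcongr
    exact ih x

theorem pow_le_matPow (M : V → V → ℝ≥0∞) (n k : ℕ) (v : V) :
    matPow M n v v ^ k ≤ matPow M (n * k) v v := by
  induction k with
  | zero => simp [matPow]
  | succ k ih =>
    rw [pow_succ, Nat.mul_succ]
    exact (mul_le_mul_left ih _).trans (matPow_mul_le M _ _ v v v)

/-- Expansion of a matrix power along the first arrow, which separates paths according to
their first arrow even when parallel arrows are present. -/
theorem Apow_succ (s r : A → V) (F : A → ℝ) (β : ℝ) (n : ℕ) (v w : V) :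
    Apow s r F β (n + 1) v w = ∑' a : {a : A // s a = v},
      ENNReal.ofReal (Real.exp (-(β * F a.1))) * Apow s r F β n (r a.1) w := by
  classical
  have key : ∀ x : V, Amat s r F β v x * matPow (Amat s r F β) n x w =
      ∑' a : {a : A // s a = v}, if x = r a.1 then
        ENNReal.ofReal (Real.exp (-(β * F a.1))) * Apow s r F β n (r a.1) w else 0 := by
    intro x
    rw [Amat, ← ENNReal.tsum_mul_right]
    rw [← Function.Injective.tsum_eq
      (g := fun a : {a : A // s a = v ∧ r a = x} => (⟨a.1, a.2.1⟩ : {a : A // s a = v}))]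
    · refine tsum_congr fun a => ?_
      simp [a.2.2, Apow]
    · intro a b h
      simpa [Subtype.ext_iff] using h
    · intro a ha
      have : x = r a.1 := by
        by_contra hx
        simp [hx] at ha
      exact ⟨⟨a.1, a.2, this.symm⟩, rfl⟩
  simp only [Apow] at key ⊢
  rw [matPow]
  simp only [key]
  rw [ENNReal.tsum_comm]
  exact tsum_congr fun a => tsum_ite_eq _ _

theorem wt_le_Apow {s r : A → V} (F : A → ℝ) (β : ℝ) : ∀ {l : List A} {v w : V},
    IsWalk s r l v w → wt F β l ≤ Apow s r F β l.length v w
  | [], v, w, h => by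
    cases h
    rw [wt_nil]
    exact (matPow_zero_self _ _).ge
  | a :: l, v, w, h => by
    rw [wt_cons, List.length_cons, Apow_succ]
    refine le_trans ?_ (ENNReal.le_tsum (⟨a, h.1⟩ : {a : A // s a = v}))
    gcongr
    exact wt_le_Apow F β h.2

/-- Walks starting with two different arrows contribute independently to
a matrix power. -/
theorem add_le_Apow_succ {s r : A → V} (F : A → ℝ) (β : ℝ) (n : ℕ) {a b : A} (hab : a ≠ b)
    {u : V} (ha : s a = u) (hb : s b = u) (w : V) :
    ENNReal.ofReal (Real.exp (-(β * F a))) * Apow s r F β n (r a) w +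
      ENNReal.ofReal (Real.exp (-(β * F b))) * Apow s r F β n (r b) w ≤
    Apow s r F β (n + 1) u w := by
  classical
  rw [Apow_succ]
  have h := ENNReal.sum_le_tsum (f := fun a : {a : A // s a = u} =>
    ENNReal.ofReal (Real.exp (-(β * F a.1))) * Apow s r F β n (r a.1) w) {⟨a, ha⟩, ⟨b, hb⟩}
  rwa [Finset.sum_pair (by simpa [Subtype.ext_iff] using hab)] at h

/-- Going around the loop `a :: l` a total of `k + 1` times; the first arrow is kept
separate. -/
theorem wt_pow_le {s r : A → V} (F : A → ℝ) (β : ℝ) {a : A} {l : List A} {u : V}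
    (h : IsWalk s r (a :: l) u u) (k : ℕ) :
    wt F β (a :: l) ^ (k + 1) ≤ ENNReal.ofReal (Real.exp (-(β * F a))) *
      Apow s r F β (l.length + (l.length + 1) * k) (r a) u := by
  rw [pow_succ']
  nth_rewrite 1 [wt_cons]
  rw [mul_assoc]
  gcongr
  calc wt F β l * wt F β (a :: l) ^ k
      ≤ Apow s r F β l.length (r a) u * Apow s r F β (l.length + 1) u u ^ k := by
        gcongr
        · exact wt_le_Apow F β h.2
        · exact wt_le_Apow F β h
    _ ≤ Apow s r F β l.length (r a) u * Apow s r F β ((l.length + 1) * k) u u := by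
        gcongr
        exact pow_le_matPow _ _ _ _
    _ ≤ _ := matPow_mul_le _ _ _ _ _ _

/-- A loop of weight at least `1` and a second loop at the same vertex with another first
arrow force a diagonal entry of some power to exceed `1`. -/
theorem exists_one_lt_Apow {s r : A → V} (F : A → ℝ) (β : ℝ) {a b : A} (hab : a ≠ b)
    {l l' : List A} {u : V} (h : IsWalk s r (a :: l) u u) (h' : IsWalk s r (b :: l') u u)
    (hw : 1 ≤ wt F β (a :: l)) : ∃ n, 1 < Apow s r F β n u u := by
  -- The common length `(l.length + 1) * (l'.length + 1)` of the two iterated loops.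
  refine ⟨l.length + (l.length + 1) * l'.length + 1, ?_⟩
  refine lt_of_lt_of_le ?_ (add_le_Apow_succ F β _ hab h.1 h'.1 u)
  have h₁ := (one_le_pow₀ hw).trans (wt_pow_le F β h l'.length)
  have h₂ := (ENNReal.pow_pos (wt_pos F β (b :: l')) (l.length + 1)).trans_le
    (wt_pow_le F β h' l.length)
  rw [show l'.length + (l'.length + 1) * l.length = l.length + (l.length + 1) * l'.length by
    ring] at h₂
  calc (1 : ℝ≥0∞) < 1 + _ := ENNReal.lt_add_right ENNReal.one_ne_top h₂.ne'
    _ ≤ _ := by gcongr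

/-! ### Upper limits of roots, and a loop of weight at least one -/

theorem one_lt_limsup (M : V → V → ℝ≥0∞) (n : ℕ) (v : V) (h : 1 < matPow M n v v) :
    1 < limsup (fun n : ℕ => matPow M n v v ^ ((n : ℝ)⁻¹)) atTop := by
  have hn : n ≠ 0 := by
    rintro rfl
    simp [matPow_zero_self] at h
  have hnR : (0 : ℝ) < n := by exact_mod_cast Nat.pos_of_ne_zero hn
  refine lt_of_lt_of_le (ENNReal.one_lt_rpow h (inv_pos.2 hnR)) ?_
  refine le_limsup_of_frequently_le ?_
  refine frequently_atTop.2 fun k => ⟨n * (k + 1), ?_, ?_⟩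
  · nlinarith [Nat.pos_of_ne_zero hn]
  · calc matPow M n v v ^ ((n : ℝ)⁻¹)
        = (matPow M n v v ^ (k + 1)) ^ (((n * (k + 1) : ℕ) : ℝ)⁻¹) := by
          rw [← ENNReal.rpow_natCast, ← ENNReal.rpow_mul]
          congr 1
          push_cast
          field_simp
      _ ≤ _ := ENNReal.rpow_le_rpow (pow_le_matPow M n (k + 1) v) (by positivity)

theorem exists_one_lt_mul_pow {c t : ℝ≥0∞} (hc : c ≠ 0) (ht : 1 < t) :
    ∃ k : ℕ, 1 < c * t ^ k := by
  have h : Tendsto (fun k : ℕ => c * t ^ k) atTop (𝓝 (c * ⊤)) :=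
    ENNReal.Tendsto.const_mul (ENNReal.tendsto_pow_atTop_nhds_top_iff.2 ht) (Or.inl (by simp))
  rw [ENNReal.mul_top hc] at h
  exact (h.eventually (lt_mem_nhds ENNReal.one_lt_top)).exists

theorem exists_loop_le {s r : A → V} {F : A → ℝ}
    (hF : (∃ l : List A, IsLoop s r l ∧ (l.map F).sum = 0) ∨
      (∃ l₁ l₂ : List A, IsLoop s r l₁ ∧ IsLoop s r l₂ ∧
        (l₁.map F).sum < 0 ∧ 0 < (l₂.map F).sum)) (β : ℝ) :
    ∃ l : List A, IsLoop s r l ∧ β * (l.map F).sum ≤ 0 := by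
  rcases hF with ⟨l, hl, h0⟩ | ⟨l₁, l₂, h₁, h₂, hneg, hpos⟩
  · exact ⟨l, hl, by simp [h0]⟩
  · rcases le_total 0 β with hβ | hβ
    · exact ⟨l₁, h₁, mul_nonpos_of_nonneg_of_nonpos hβ hneg.le⟩
    · exact ⟨l₂, h₂, mul_nonpos_of_nonpos_of_nonneg hβ hpos.le⟩

/-- if `Γ` is strongly connected, every loop has an exit, and either some
loop has potential `0` or there are loops of negative and positive potential, then
`limsupₙ (A(β)ⁿ_{v,v})^{1/n} > 1` for every `β` and every vertex `v`. -/
theorem statement16 {V A : Type} [Countable V] [Countable A] (s r : A → V)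
    (F : A → ℝ)
    (hsc : ∀ v w : V, ∃ l : List A, IsPathList s r l v w)
    (hexit : ∀ l : List A, IsLoop s r l →
      ∃ a ∈ l, ∃ b c : A, b ≠ c ∧ s b = s a ∧ s c = s a)
    (hF : (∃ l : List A, IsLoop s r l ∧ (l.map F).sum = 0) ∨
      (∃ l₁ l₂ : List A, IsLoop s r l₁ ∧ IsLoop s r l₂ ∧
        (l₁.map F).sum < 0 ∧ 0 < (l₂.map F).sum)) :
    ∀ (β : ℝ) (v : V),
      1 < Filter.limsup (fun n : ℕ => Apow s r F β n v v ^ ((n : ℝ)⁻¹)) Filter.atTop := by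
  intro β v
  obtain ⟨l, hl, hle⟩ := exists_loop_le hF β
  obtain ⟨a, ha, b, c, hbc, hb, hc⟩ := hexit l hl
  obtain ⟨x, hx⟩ := hl.isWalk
  obtain ⟨l₁, l₂, rfl⟩ := List.append_of_mem ha
  obtain ⟨hx₁, hx₂⟩ := hx.of_append_cons
  -- The loop rotated so as to start with the arrow `a`.
  have hloop : IsWalk s r (a :: (l₂ ++ l₁)) (s a) (s a) := hx₂.append hx₁
  have hw : 1 ≤ wt F β (a :: (l₂ ++ l₁)) := by
    apply one_le_wt
    convert hle using 2
    simp only [List.map_cons, List.map_append, List.sum_cons, List.sum_append]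
    ring
  obtain ⟨d, had, hd⟩ : ∃ d, a ≠ d ∧ s d = s a := by
    by_cases hab : a = b
    · exact ⟨c, hab ▸ hbc, hc⟩
    · exact ⟨b, hab, hb⟩
  obtain ⟨l', hl'⟩ := hsc (r d) (s a)
  obtain ⟨N, hN⟩ := exists_one_lt_Apow F β had hloop
    (show IsWalk s r (d :: l') (s a) (s a) from ⟨hd, hl'.isWalk⟩) hw
  obtain ⟨p, hp⟩ := hsc v (s a)
  obtain ⟨q, hq⟩ := hsc (s a) v
  obtain ⟨k, hk⟩ := exists_one_lt_mul_pow
    (mul_ne_zero (wt_pos F β p).ne' (wt_pos F β q).ne') hN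
  refine one_lt_limsup _ (p.length + N * k + q.length) v (hk.trans_le ?_)
  calc wt F β p * wt F β q * Apow s r F β N (s a) (s a) ^ k
      = wt F β p * Apow s r F β N (s a) (s a) ^ k * wt F β q := by ring
    _ ≤ Apow s r F β p.length v (s a) * Apow s r F β (N * k) (s a) (s a) *
          Apow s r F β q.length (s a) v := by
        gcongr
        · exact wt_le_Apow F β hp.isWalk
        · exact pow_le_matPow _ _ _ _
        · exact wt_le_Apow F β hq.isWalk
    _ ≤ Apow s r F β (p.length + N * k) v (s a) * Apow s r F β q.length (s a) v := by
        gcongr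
        exact matPow_mul_le _ _ _ _ _ _
    _ ≤ _ := matPow_mul_le _ _ _ _ _ _

end GraphKMS
end

section
/- For every real number h > 1 there is a matrix A = (A_{ij})_{i,j ∈ ℕ} with entries in ℕ (including 0) such that: (i) A is row-finite, i.e. for each i only finitely many j have A_{ij} ≠ 0; (ii) A is irreducible, i.e. for all i, j there is n ≥ 1 with (A^n)_{ij} > 0; (iii) for every λ < h the only ψ : ℕ → [0,∞) satisfying Σ_j A_{ij} ψ_j = λ ψ_i for all i is ψ = 0; (iv) for every λ ≥ h the set S_λ = {ψ : ℕ → [0,∞) : Σ_j A_{ij} ψ_j = λ ψ_i for all i, and ψ_1 = 1} is a nonempty compact convex subset of ℝ^ℕ (product topology) whose set of extreme points is closed; and (v) for λ, λ' ≥ h, S_λ and S_{λ'} are affinely homeomorphic if and only if λ = λ'. -/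
/-!
The matrix is the adjacency matrix of a graph, built so that its normalized eigenvectors for the
eigenvalue `lam` are described by flows on a forest whose convergence properties depend on `lam`.

*The graph.* There is a trunk `u 0 → u 1 → …`, a forest whose vertices `b s` are attached to the
trunk at `u (2 * lev s)` by `ee s` edges, and a return road `… → z 1 → z 0 → u 0`. Each `b s` has one
edge to each of its children and one edge to a distant point of the road; moreover there are
`rr h k` edges from `u k` to `u 0`. The numbers `rr h k` grow like `h ^ k` up to a quadratic factor:
this excludes eigenvectors for `lam < h` (`Eig.eq_zero_of_lt`, `exists_lt_rr`), but leaves room for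
them when `lam ≥ h`, since `∑ rr h k * lam⁻¹ ^ (k + 1) ≤ 1 / 2`.

*Eigenvectors and flows.* The eigenvalue equation determines the values on the road and on the trunk
from those on the forest. On the forest it is, after rescaling, the flow equation with a source
term coming from the edges to the road. Subtracting the minimal solution `κ` of that equation, one
identifies the normalized eigenvectors with the flows `m` on the forest such that `∑ c s * m s ≤ L`
for certain weights `c` (`eig_eq_image`); nonnegativity on the trunk becomes this budget condition.
The road is long enough for `L` to be positive (`exists_eig_eq_image`). Such flows form a compact
convex set.

*Extreme points.* The extreme flows are the zero flow and the flows of maximal strength along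
single infinite paths of finite weight (`range_pointFlow`). All paths in the tree number `n` have
the same weight, which is finite precisely when `qq n < lam`, where `qq` enumerates the nonnegative
rational numbers (`active_ww`). Thus the extreme boundary is a copy of the compact space of ends of
the trees in `{n | qq n < lam}`, with one more point for the zero flow.

*Recovering `lam`.* The trees are chosen with distinguishable spaces of ends. The ends of the tree
number `n` are the subsets of `ℕ` with least element `n` whose other elements are all even, at most
`n + 1` in number, or all odd. Here `{n}` has Cantor–Bendixson rank `n + 1` in the closure of the
isolated points, and it is the only one of these points in the closure of the remaining ends. Hence
the topology of the extreme boundary determines the set `{n | qq n < lam}` (`endSp_homeo`), and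
therefore `lam`. An affine homeomorphism restricts to a homeomorphism of the extreme boundaries.
-/

open MeasureTheory Filter Topology
open scoped ENNReal NNReal

namespace GraphKMS

variable {V A : Type}

/-! ### A topological invariant -/

/-- The closure of the set of isolated points. -/
def isoClosure (X : Type) [TopologicalSpace X] : Set X := closure {x | IsOpen ({x} : Set X)}

/-- The iterated derived sets of the closure of the isolated points: `rankSet X (k + 1)` consists
of the accumulation points of `rankSet X k` which belong to it. -/
def rankSet (X : Type) [TopologicalSpace X] : ℕ → Set X
  | 0 => isoClosure X
  | k + 1 => {x | x ∈ rankSet X k ∧ ∀ U ∈ 𝓝 x, ∃ y ∈ U, y ≠ x ∧ y ∈ rankSet X k}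

/-- The numbers `n` such that some point in the closure of the complement of `isoClosure X` lies in
the derived set number `n + 1`, but not in the next one. This is a homeomorphism invariant. -/
def markedRanks (X : Type) [TopologicalSpace X] : Set ℕ :=
  {n | ∃ x ∈ closure (isoClosure X)ᶜ, x ∈ rankSet X (n + 1) ∧ x ∉ rankSet X (n + 2)}

section Invariance
variable {X Y : Type} [TopologicalSpace X] [TopologicalSpace Y]

theorem isoClosure_homeo (e : X ≃ₜ Y) : e ⁻¹' isoClosure Y = isoClosure X := by
  unfold isoClosure
  rw [e.preimage_closure]
  congr 1
  ext x
  simp only [Set.mem_preimage, Set.mem_ofPred_eq]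
  rw [← e.isOpen_image, Set.image_singleton]

theorem rankSet_homeo (e : X ≃ₜ Y) (k : ℕ) : e ⁻¹' rankSet Y k = rankSet X k := by
  induction k with
  | zero => exact isoClosure_homeo e
  | succ k ih =>
    ext x
    simp only [rankSet, Set.mem_preimage, Set.mem_ofPred_eq, ← ih]
    refine and_congr_right fun _ => ⟨fun h U hU => ?_, fun h U hU => ?_⟩
    · obtain ⟨y, hy, hne, hk⟩ := h (e '' U) (e.isOpenMap.image_mem_nhds hU)
      obtain ⟨z, hz, rfl⟩ := hy
      exact ⟨z, hz, fun h => hne (by rw [h]), hk⟩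
    · obtain ⟨y, hy, hne, hk⟩ := h (e ⁻¹' U) (e.continuous.continuousAt hU)
      exact ⟨e y, hy, fun h => hne (e.injective h), hk⟩

theorem markedRanks_homeo (e : X ≃ₜ Y) : markedRanks X = markedRanks Y := by
  ext n
  simp only [markedRanks, Set.mem_ofPred_eq, ← rankSet_homeo e, ← isoClosure_homeo e,
    ← Set.preimage_compl, ← e.preimage_closure, Set.mem_preimage]
  exact (e.surjective.exists (p := fun y => y ∈ closure (isoClosure Y)ᶜ ∧
    y ∈ rankSet Y (n + 1) ∧ y ∉ rankSet Y (n + 2))).symm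

end Invariance

/-! ### The spaces of ends -/

/-- The admissible sets with least element `n`: apart from `n`, their elements are all even, in
which case there are at most `n + 2` elements in total, or all odd, without further restriction.
The sets of even type form a countable part of Cantor–Bendixson rank `n + 1` at `{n}`, those of odd
type a Cantor set through `{n}`. -/
def Adm (n : ℕ) (X : Set ℕ) : Prop :=
  n ∈ X ∧ (∀ i ∈ X, n ≤ i) ∧
    (((∀ i ∈ X, i = n ∨ Even i) ∧ ∀ T : Finset ℕ, (T : Set ℕ) ⊆ X → T.card ≤ n + 2) ∨
      ∀ i ∈ X, i = n ∨ Odd i)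

theorem Adm.mono {n : ℕ} {X Y : Set ℕ} (h : Adm n X) (hYX : Y ⊆ X) (hn : n ∈ Y) : Adm n Y := by
  refine ⟨hn, fun i hi => h.2.1 i (hYX hi), ?_⟩
  rcases h.2.2 with ⟨h1, h2⟩ | h1
  · exact Or.inl ⟨fun i hi => h1 i (hYX hi), fun T hT => h2 T (hT.trans hYX)⟩
  · exact Or.inr fun i hi => h1 i (hYX hi)

theorem Adm.unique {n k : ℕ} {X : Set ℕ} (h : Adm n X) (h' : Adm k X) : n = k :=
  le_antisymm (h.2.1 k h'.1) (h'.2.1 n h.1)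

/-- Admissibility only depends on initial segments; hence an infinite path through the tree of
finite approximations with index `n` ends at an admissible set. -/
theorem adm_of_frequently {n : ℕ} {X : Set ℕ}
    (h : ∀ j₀, ∃ j, j₀ ≤ j ∧ Adm n (X ∩ {i | i < j})) : Adm n X := by
  refine ⟨?_, fun i hi => ?_, ?_⟩
  · obtain ⟨j, -, hj⟩ := h 0
    exact hj.1.1
  · obtain ⟨j, hij, hj⟩ := h (i + 1)
    exact hj.2.1 i ⟨hi, by simp; omega⟩
  · by_cases hodd : ∃ i ∈ X, i ≠ n ∧ Odd i
    · obtain ⟨i, hi, hin, hio⟩ := hodd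
      right
      intro k hk
      obtain ⟨j, hij, hj⟩ := h (i + k + 1)
      rcases hj.2.2 with ⟨h1, -⟩ | h1
      · rcases h1 i ⟨hi, by simp; omega⟩ with h2 | h2
        · exact absurd h2 hin
        · exact absurd hio (Nat.not_odd_iff_even.2 h2)
      · exact h1 k ⟨hk, by simp; omega⟩
    · push Not at hodd
      left
      refine ⟨fun i hi => ?_, fun T hT => ?_⟩
      · by_cases hin : i = n
        · exact Or.inl hin
        · exact Or.inr (Nat.not_odd_iff_even.1 (hodd i hi hin))
      · obtain ⟨j, hij, hj⟩ := h (T.sup id + 1)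
        have hTj : (T : Set ℕ) ⊆ X ∩ {i | i < j} := fun i hi =>
          ⟨hT hi, by have := Finset.le_sup (f := id) (Finset.mem_coe.1 hi); simp at this ⊢; omega⟩
        rcases hj.2.2 with ⟨-, h2⟩ | h1
        · exact h2 T hTj
        · have : T ⊆ {n} := fun i hi => by
            rcases h1 i (hTj hi) with h2 | h2
            · simpa using h2
            · by_contra hne
              exact hodd i (hT hi) (by simpa using hne) h2
          have := Finset.card_le_card this
          simp at this
          omega

/-- The subset of `ℕ` with indicator function `x`. -/
def supp (x : ℕ → Bool) : Set ℕ := {i | x i = true}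

/-- The space of ends: the empty set together with the admissible sets whose least element is
in `A`, with the topology of the Cantor space. -/
def EndSp (A : Set ℕ) : Set (ℕ → Bool) := {x | supp x = ∅ ∨ ∃ n ∈ A, Adm n (supp x)}

theorem cyl_mem_nhds (x : ℕ → Bool) (N : ℕ) : {y : ℕ → Bool | ∀ i < N, y i = x i} ∈ 𝓝 x := by
  have : {y : ℕ → Bool | ∀ i < N, y i = x i} = Set.pi (Set.Iio N) (fun i => {x i}) := by
    ext y; simp [Set.mem_pi]
  rw [this]
  exact set_pi_mem_nhds (Set.finite_Iio N) fun i _ => by simp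

theorem exists_cyl_subset {x : ℕ → Bool} {U : Set (ℕ → Bool)} (hU : U ∈ 𝓝 x) :
    ∃ N, {y : ℕ → Bool | ∀ i < N, y i = x i} ⊆ U := by
  rw [nhds_pi, Filter.mem_pi] at hU
  obtain ⟨I, hI, t, ht, hsub⟩ := hU
  obtain ⟨N, hN⟩ := hI.bddAbove
  refine ⟨N + 1, fun y hy => hsub fun i hi => ?_⟩
  rw [hy i (Nat.lt_succ_of_le (hN hi))]
  exact mem_of_mem_nhds (ht i)

theorem mem_nhds_iff_cyl {A : Set ℕ} {x : EndSp A} {U : Set (EndSp A)} :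
    U ∈ 𝓝 x ↔ ∃ N, ∀ y : EndSp A, (∀ i < N, y.1 i = x.1 i) → y ∈ U := by
  constructor
  · intro h
    obtain ⟨W, hW, hWU⟩ := mem_nhds_subtype _ _ _ |>.1 h
    obtain ⟨N, hN⟩ := exists_cyl_subset hW
    exact ⟨N, fun y hy => hWU (hN hy)⟩
  · rintro ⟨N, hN⟩
    exact mem_nhds_subtype _ _ _ |>.2 ⟨_, cyl_mem_nhds x.1 N, fun y hy => hN y hy⟩

theorem isClosed_endSp (A : Set ℕ) : IsClosed (EndSp A) := by
  rw [isClosed_iff_nhds]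
  intro x hx
  have key : ∀ N, ∃ y ∈ EndSp A, ∀ i < N, y i = x i := fun N => by
    obtain ⟨y, hy, hyA⟩ := hx _ (cyl_mem_nhds x N)
    exact ⟨y, hyA, hy⟩
  by_cases hemp : supp x = ∅
  · exact Or.inl hemp
  · obtain ⟨i₀, hi₀⟩ := Set.nonempty_iff_ne_empty.2 hemp
    have key2 : ∀ N, i₀ < N → ∃ n ∈ A, n ∈ supp x ∧ (∀ i ∈ supp x, n ≤ i) ∧
        Adm n (supp x ∩ {i | i < N}) := by
      intro N hN
      obtain ⟨y, hy, hyx⟩ := key N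
      have hi₀y : i₀ ∈ supp y := by simpa [supp, hyx i₀ hN] using hi₀
      rcases hy with hy | ⟨n, hnA, hn⟩
      · simp [hy] at hi₀y
      · have hnN : n < N := lt_of_le_of_lt (hn.2.1 _ hi₀y) hN
        have hnx : n ∈ supp x := by simpa [supp, ← hyx n hnN] using hn.1
        refine ⟨n, hnA, hnx, fun i hi => ?_, hn.mono ?_ ⟨hnx, hnN⟩⟩
        · by_cases hiN : i < N
          · exact hn.2.1 i (by simpa [supp, hyx i hiN] using hi)
          · omega
        · rintro i ⟨hi, hiN⟩
          simpa [supp, hyx i hiN] using hi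
    obtain ⟨n, hnA, hnx, hmin, -⟩ := key2 (i₀ + 1) (by omega)
    refine Or.inr ⟨n, hnA, adm_of_frequently fun j₀ => ⟨j₀ + i₀ + 1, by omega, ?_⟩⟩
    obtain ⟨k, -, hkx, hkmin, hk⟩ := key2 (j₀ + i₀ + 1) (by omega)
    rwa [le_antisymm (hmin k hkx) (hkmin n hnx)]

/-! ### The ranks of the ends -/

/-- Admissible sets of even type with least element `n` which remain so when up to `k` further
elements are added. -/
def EvAdm (n k : ℕ) (X : Set ℕ) : Prop :=
  n ∈ X ∧ (∀ i ∈ X, n ≤ i) ∧ (∀ i ∈ X, i = n ∨ Even i) ∧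
    ∀ T : Finset ℕ, (T : Set ℕ) ⊆ X → T.card + k ≤ n + 2

theorem EvAdm.adm {n k : ℕ} {X : Set ℕ} (h : EvAdm n k X) : Adm n X :=
  ⟨h.1, h.2.1, Or.inl ⟨h.2.2.1, fun T hT => by have := h.2.2.2 T hT; omega⟩⟩

theorem EvAdm.weaken {n k l : ℕ} {X : Set ℕ} (h : EvAdm n k X) (hl : l ≤ k) : EvAdm n l X :=
  ⟨h.1, h.2.1, h.2.2.1, fun T hT => by have := h.2.2.2 T hT; omega⟩

theorem EvAdm.insert {n k i : ℕ} {X : Set ℕ} (h : EvAdm n (k + 1) X) (hi : Even i) (hni : n ≤ i) :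
    EvAdm n k (insert i X) := by
  refine ⟨Or.inr h.1, ?_, ?_, fun T hT => ?_⟩
  · rintro j (rfl | hj)
    exacts [hni, h.2.1 j hj]
  · rintro j (rfl | hj)
    exacts [Or.inr hi, h.2.2.1 j hj]
  · have h1 := h.2.2.2 (T.erase i) (by
      intro j hj
      simp only [Finset.coe_erase, Set.mem_sdiff, Set.mem_singleton_iff] at hj
      exact (hT hj.1).resolve_left hj.2)
    have := Finset.pred_card_le_card_erase (s := T) (a := i)
    omega

theorem EvAdm.of_ssubset {n k : ℕ} {X Y : Set ℕ} (h : EvAdm n k Y) (hXY : X ⊂ Y) (hn : n ∈ X) :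
    EvAdm n (k + 1) X := by
  refine ⟨hn, fun i hi => h.2.1 i (hXY.1 hi), fun i hi => h.2.2.1 i (hXY.1 hi), fun T hT => ?_⟩
  obtain ⟨y, hy, hyX⟩ := Set.exists_of_ssubset hXY
  have h1 := h.2.2.2 (Insert.insert y T) (by
    rw [Finset.coe_insert]
    exact Set.insert_subset hy (hT.trans hXY.1))
  rw [Finset.card_insert_of_notMem (fun hyT => hyX (hT hyT))] at h1
  omega

theorem EvAdm.finite {n k : ℕ} {X : Set ℕ} (h : EvAdm n k X) : X.Finite := by
  by_contra hX
  obtain ⟨T, hT, hc⟩ := Set.Infinite.exists_subset_card_eq hX (n + 3)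
  have := h.2.2.2 T hT
  omega

theorem EvAdm.exists_bound {n k : ℕ} {X : Set ℕ} (h : EvAdm n k X) : ∃ N, ∀ i ∈ X, i < N := by
  obtain ⟨N, hN⟩ := h.finite.bddAbove
  exact ⟨N + 1, fun i hi => Nat.lt_succ_of_le (hN hi)⟩

theorem supp_update (x : ℕ → Bool) (i : ℕ) :
    supp (Function.update x i true) = insert i (supp x) := by
  ext j
  by_cases h : j = i
  · subst h; simp [supp]
  · simp [supp, h]

theorem supp_injective : Function.Injective supp := by
  intro x y h
  funext i
  have : x i = true ↔ y i = true := by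
    change i ∈ supp x ↔ i ∈ supp y
    rw [h]
  exact Bool.eq_iff_iff.2 this

/-- An end which agrees with `x` on an initial segment containing `n` has the same least element. -/
theorem adm_of_agree {A : Set ℕ} {n N : ℕ} {x : ℕ → Bool} (hx : Adm n (supp x)) (y : EndSp A)
    (hN : n < N) (hyx : ∀ i < N, y.1 i = x i) : n ∈ A ∧ Adm n (supp y.1) := by
  have hny : n ∈ supp y.1 := by
    have := hx.1
    simpa [supp, hyx n hN] using this
  rcases y.2 with hy | ⟨k, hkA, hk⟩
  · simp [hy] at hny
  · have hkn := hk.2.1 n hny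
    have hkx : k ∈ supp x := by
      have := hk.1
      simpa [supp, hyx k (by omega)] using this
    have hnk := hx.2.1 k hkx
    obtain rfl : n = k := by omega
    exact ⟨hkA, hk⟩

theorem isolated_iff_cyl {A : Set ℕ} {x : EndSp A} :
    IsOpen ({x} : Set (EndSp A)) ↔ ∃ N, ∀ y : EndSp A, (∀ i < N, y.1 i = x.1 i) → y = x := by
  rw [isOpen_iff_mem_nhds]
  simp only [Set.mem_singleton_iff, forall_eq]
  rw [mem_nhds_iff_cyl]
  simp

/-- Every end of even type is a limit of isolated points. The proof is by induction on the number
`c` of elements missing to the maximal size `n + 2`; sets of maximal size are isolated. -/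
theorem isoClosure_of_evAdm {A : Set ℕ} {n : ℕ} (hn : n ∈ A) (c : ℕ) :
    ∀ x : EndSp A, EvAdm n 0 (supp x.1) →
      (∃ T : Finset ℕ, (T : Set ℕ) ⊆ supp x.1 ∧ n + 2 ≤ T.card + c) → x ∈ isoClosure (EndSp A) := by
  have base : ∀ x : EndSp A, EvAdm n 0 (supp x.1) →
      (∃ T : Finset ℕ, (T : Set ℕ) ⊆ supp x.1 ∧ n + 2 ≤ T.card) → x ∈ isoClosure (EndSp A) := by
    rintro x hx ⟨T, hT, hc⟩
    refine subset_closure ?_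
    change IsOpen {x}
    refine isolated_iff_cyl.2 ?_
    obtain ⟨M, hM⟩ := hx.exists_bound
    obtain ⟨i, hiT, hin⟩ : ∃ i ∈ T, i ≠ n := Finset.exists_mem_ne (by omega) n
    refine ⟨M, fun y hy => ?_⟩
    have hyadm := (adm_of_agree hx.adm y (hM n hx.1) hy).2
    have hsub : supp x.1 ⊆ supp y.1 := fun j hj => by
      have h := hj
      simpa [supp, ← hy j (hM j hj)] using h
    refine Subtype.ext (supp_injective (Set.Subset.antisymm ?_ hsub))
    intro j hj
    rcases hyadm.2.2 with ⟨-, h2⟩ | h2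
    · by_contra hjx
      have h3 := h2 (insert j T) (by
        rw [Finset.coe_insert]
        exact Set.insert_subset hj (hT.trans hsub))
      rw [Finset.card_insert_of_notMem (fun h => hjx (hT h))] at h3
      omega
    · have h3 := (h2 i (hsub (hT hiT))).resolve_left hin
      have h4 := (hx.2.2.1 i (hT hiT)).resolve_left hin
      exact absurd h3 (Nat.not_odd_iff_even.2 h4)
  induction c with
  | zero => simpa using base
  | succ c ih =>
    rintro x hx ⟨T, hT, hc⟩
    by_cases h1 : EvAdm n 1 (supp x.1)
    · rw [isoClosure, ← closure_closure]
      refine mem_closure_iff_nhds.2 fun U hU => ?_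
      obtain ⟨N, hN⟩ := mem_nhds_iff_cyl.1 hU
      obtain ⟨M, hM⟩ := h1.exists_bound
      have h2 : EvAdm n 0 (supp (Function.update x.1 (2 * (N + M + n)) true)) := by
        rw [supp_update]
        exact h1.insert (by simp) (by omega)
      let y : EndSp A := ⟨_, Or.inr ⟨n, hn, h2.adm⟩⟩
      refine ⟨y, hN y fun i hi => ?_, ih y h2 ⟨insert (2 * (N + M + n)) T, ?_, ?_⟩⟩
      · exact Function.update_of_ne (by omega) _ _
      · rw [Finset.coe_insert]
        change _ ⊆ supp (Function.update x.1 (2 * (N + M + n)) true)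
        rw [supp_update]
        exact Set.insert_subset_insert hT
      · rw [Finset.card_insert_of_notMem]
        · omega
        · intro h
          have := hM _ (hT h)
          omega
    · refine base x hx ?_
      by_contra hcon
      push Not at hcon
      exact h1 ⟨hx.1, hx.2.1, hx.2.2.1, fun T hT => by have := hcon T hT; omega⟩

/-- An end of even type to which `k` elements can still be added has rank at least `k`, as a limit
of the ends obtained by adding one large even number. -/
theorem rankSet_of_evAdm {A : Set ℕ} {n : ℕ} (hn : n ∈ A) (k : ℕ) :
    ∀ x : EndSp A, EvAdm n k (supp x.1) → x ∈ rankSet (EndSp A) k := by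
  induction k with
  | zero => exact fun x hx => isoClosure_of_evAdm hn (n + 2) x hx ⟨∅, by simp, by simp⟩
  | succ k ih =>
    refine fun x hx => ⟨ih x (hx.weaken (by omega)), fun U hU => ?_⟩
    obtain ⟨N, hN⟩ := mem_nhds_iff_cyl.1 hU
    obtain ⟨M, hM⟩ := hx.exists_bound
    have h2 : EvAdm n k (supp (Function.update x.1 (2 * (N + M + n)) true)) := by
      rw [supp_update]
      exact hx.insert (by simp) (by omega)
    let y : EndSp A := ⟨_, Or.inr ⟨n, hn, h2.adm⟩⟩
    refine ⟨y, hN y fun i hi => Function.update_of_ne (by omega) _ _, fun h => ?_, ih y h2⟩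
    have h3 : 2 * (N + M + n) ∈ supp y.1 := by
      change _ ∈ supp (Function.update x.1 (2 * (N + M + n)) true)
      rw [supp_update]
      exact Set.mem_insert _ _
    rw [h] at h3
    have := hM _ h3
    omega

/-- The converse of `rankSet_of_evAdm`: near an end with an odd element other than `n` there are no
isolated points, and the ends close to a finite set are its supersets. -/
theorem evAdm_of_rankSet {A : Set ℕ} {n : ℕ} (k : ℕ) :
    ∀ x : EndSp A, Adm n (supp x.1) → x ∈ rankSet (EndSp A) k → EvAdm n k (supp x.1) := by
  induction k with
  | zero =>
    intro x hx hk
    have hev : ∀ i ∈ supp x.1, i = n ∨ Even i := by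
      intro i hi
      by_contra hcon
      push Not at hcon
      obtain ⟨hin, hio⟩ := hcon
      have hU : {y : EndSp A | ∀ j < i + n + 1, y.1 j = x.1 j} ∈ 𝓝 x :=
        mem_nhds_iff_cyl.2 ⟨_, fun y hy => hy⟩
      obtain ⟨y, hy, hyiso⟩ := mem_closure_iff_nhds.1 hk _ hU
      obtain ⟨hnA, hyadm⟩ := adm_of_agree hx y (by omega) hy
      have hiy : i ∈ supp y.1 := by
        have h := hi
        simpa [supp, ← hy i (by omega)] using h
      have hodd : ∀ j ∈ supp y.1, j = n ∨ Odd j := by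
        rcases hyadm.2.2 with ⟨h1, -⟩ | h1
        · exact absurd ((h1 i hiy).resolve_left hin) hio
        · exact h1
      obtain ⟨N, hN⟩ := isolated_iff_cyl.1 hyiso
      -- flipping a large odd coordinate of `y` gives another end in the same neighbourhood
      have hsub : supp (Function.update y.1 (2 * (N + n) + 1) (!y.1 (2 * (N + n) + 1))) ⊆
          insert (2 * (N + n) + 1) (supp y.1) := by
        intro j hj
        by_cases h : j = 2 * (N + n) + 1
        · exact Or.inl h
        · right
          simpa [supp, h] using hj
      have hz : Adm n (supp (Function.update y.1 (2 * (N + n) + 1) (!y.1 (2 * (N + n) + 1)))) := by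
        refine ⟨?_, fun j hj => ?_, Or.inr fun j hj => ?_⟩
        · have := hyadm.1
          have hne : n ≠ 2 * (N + n) + 1 := by omega
          simpa [supp, hne] using this
        · rcases hsub hj with rfl | h
          · omega
          · exact hyadm.2.1 j h
        · rcases hsub hj with rfl | h
          · exact Or.inr ⟨_, rfl⟩
          · exact hodd j h
      have := hN ⟨_, Or.inr ⟨n, hnA, hz⟩⟩ fun j hj => Function.update_of_ne (by omega) _ _
      have h2 := congrFun (congrArg Subtype.val this) (2 * (N + n) + 1)
      simp at h2
    refine ⟨hx.1, hx.2.1, hev, fun T hT => ?_⟩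
    rcases hx.2.2 with ⟨-, h1⟩ | h1
    · simpa using h1 T hT
    · have : T ⊆ {n} := fun i hi => by
        by_contra hne
        rw [Finset.mem_singleton] at hne
        exact absurd ((h1 i (hT hi)).resolve_left hne)
          (Nat.not_odd_iff_even.2 ((hev i (hT hi)).resolve_left hne))
      have := Finset.card_le_card this
      simp at this
      omega
  | succ k ih =>
    rintro x hx ⟨hk, hacc⟩
    have h1 := ih x hx hk
    obtain ⟨M, hM⟩ := h1.exists_bound
    have hU : {y : EndSp A | ∀ j < M, y.1 j = x.1 j} ∈ 𝓝 x :=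
      mem_nhds_iff_cyl.2 ⟨_, fun y hy => hy⟩
    obtain ⟨y, hy, hne, hyk⟩ := hacc _ hU
    have hyadm := (adm_of_agree hx y (hM n hx.1) hy).2
    have hsub : supp x.1 ⊆ supp y.1 := fun j hj => by
      have h := hj
      simpa [supp, ← hy j (hM j hj)] using h
    exact (ih y hyadm hyk).of_ssubset
      (hsub.ssubset_of_ne fun h => hne (Subtype.ext (supp_injective h.symm))) hx.1

theorem supp_decide_mem (S : Set ℕ) [DecidablePred (· ∈ S)] :
    supp (fun i => decide (i ∈ S)) = S := by
  ext i; simp [supp]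

theorem evAdm_singleton {n k : ℕ} (hk : k ≤ n + 1) : EvAdm n k {n} := by
  refine ⟨rfl, by simp, by simp, fun T hT => ?_⟩
  have : T ⊆ {n} := by exact_mod_cast hT
  have := Finset.card_le_card this
  simp at this
  omega

/-- The end `{n}`, the point of highest rank in its tree. -/
def topPt {A : Set ℕ} {n : ℕ} (hn : n ∈ A) : EndSp A :=
  ⟨fun i => decide (i ∈ ({n} : Set ℕ)), Or.inr ⟨n, hn, by
    rw [supp_decide_mem]
    exact (evAdm_singleton (k := 0) (by omega)).adm⟩⟩

theorem supp_topPt {A : Set ℕ} {n : ℕ} (hn : n ∈ A) : supp (topPt hn).1 = {n} :=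
  supp_decide_mem _

theorem topPt_rank {A : Set ℕ} {n k : ℕ} (hn : n ∈ A) (hk : k ≤ n + 1) :
    topPt hn ∈ rankSet (EndSp A) k :=
  rankSet_of_evAdm hn k _ (by rw [supp_topPt]; exact evAdm_singleton hk)

/-- The index set is recovered from the topology: for nonempty ends the marked points are exactly
the singletons `{n}` with `n ∈ A`, and `{n}` has rank `n + 1`. The empty end is either isolated
or of infinite rank. -/
theorem markedRanks_endSp (A : Set ℕ) : markedRanks (EndSp A) = A := by
  ext n
  constructor
  · rintro ⟨x, hxcl, hx1, hx2⟩
    by_cases hemp : supp x.1 = ∅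
    · exfalso
      -- the empty set is a limit of points `{m}` with `m` arbitrarily large
      have key : ∀ N, ∃ m, N ≤ m ∧ m ∈ A := by
        intro N
        have hU : {y : EndSp A | ∀ j < N, y.1 j = x.1 j} ∈ 𝓝 x :=
          mem_nhds_iff_cyl.2 ⟨_, fun y hy => hy⟩
        obtain ⟨y, hy, hne, -⟩ := hx1.2 _ hU
        rcases y.2 with h | ⟨m, hm, hadm⟩
        · exact absurd (Subtype.ext (supp_injective (h.trans hemp.symm))) hne
        · refine ⟨m, ?_, hm⟩
          by_contra hcon
          have h1 : m ∈ supp x.1 := by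
            have h := hadm.1
            simpa [supp, hy m (by omega)] using h
          simp [hemp] at h1
      have key2 : ∀ k, ∀ U ∈ 𝓝 x, ∃ y ∈ U, y ≠ x ∧ y ∈ rankSet (EndSp A) k := by
        intro k U hU
        obtain ⟨N, hN⟩ := mem_nhds_iff_cyl.1 hU
        obtain ⟨m, hm, hmA⟩ := key (N + k)
        refine ⟨topPt hmA, hN _ fun i hi => ?_, fun h => ?_, topPt_rank hmA (by omega)⟩
        · have h1 : i ∉ supp x.1 := by simp [hemp]
          have h2 : i ∉ supp (topPt hmA).1 := by
            rw [supp_topPt, Set.mem_singleton_iff]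
            omega
          simp only [supp, Set.mem_ofPred_eq, Bool.not_eq_true] at h1 h2
          rw [h1, h2]
        · have h1 := supp_topPt hmA
          rw [h, hemp] at h1
          exact (Set.singleton_ne_empty m) h1.symm
      have key3 : ∀ k, x ∈ rankSet (EndSp A) k := by
        intro k
        induction k with
        | zero =>
          rw [rankSet, isoClosure, ← closure_closure]
          refine mem_closure_iff_nhds.2 fun U hU => ?_
          obtain ⟨y, hy, -, hy0⟩ := key2 0 U hU
          exact ⟨y, hy, hy0⟩
        | succ k ih => exact ⟨ih, key2 k⟩
      exact hx2 (key3 _)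
    · obtain ⟨m, hmA, hadm⟩ := x.2.resolve_left hemp
      have hev := evAdm_of_rankSet (n + 1) x hadm hx1
      have hsing : supp x.1 = {m} := by
        refine Set.Subset.antisymm (fun i hi => ?_) (Set.singleton_subset_iff.2 hadm.1)
        by_contra him
        rw [Set.mem_singleton_iff] at him
        have hie := (hev.2.2.1 i hi).resolve_left him
        have hU : {y : EndSp A | ∀ j < i + m + 1, y.1 j = x.1 j} ∈ 𝓝 x :=
          mem_nhds_iff_cyl.2 ⟨_, fun y hy => hy⟩
        obtain ⟨y, hy, hyF⟩ := mem_closure_iff_nhds.1 hxcl _ hU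
        have hyadm := (adm_of_agree hadm y (by omega) hy).2
        have hiy : i ∈ supp y.1 := by
          have h := hi
          simpa [supp, ← hy i (by omega)] using h
        refine hyF (rankSet_of_evAdm hmA 0 y ?_)
        rcases hyadm.2.2 with ⟨h1, h2⟩ | h1
        · exact ⟨hyadm.1, hyadm.2.1, h1, by simpa using h2⟩
        · exact absurd ((h1 i hiy).resolve_left him) (Nat.not_odd_iff_even.2 hie)
      rw [hsing] at hev
      have h1 := hev.2.2.2 {m} (by simp)
      have h2 : ¬ n + 2 ≤ m + 1 := fun h =>
        hx2 (rankSet_of_evAdm hmA _ x (by rw [hsing]; exact evAdm_singleton h))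
      simp at h1
      obtain rfl : n = m := by omega
      exact hmA
  · intro hn
    refine ⟨topPt hn, ?_, topPt_rank hn le_rfl, fun h => ?_⟩
    -- `{n}` is a limit of ends of odd type, and these are not limits of isolated points
    · refine mem_closure_iff_nhds.2 fun U hU => ?_
      obtain ⟨N, hN⟩ := mem_nhds_iff_cyl.1 hU
      have hz : Adm n (supp (Function.update (topPt hn).1 (2 * (N + n) + 1) true)) := by
        rw [supp_update, supp_topPt]
        refine ⟨by simp, ?_, Or.inr ?_⟩
        · rintro i (rfl | rfl) <;> omega
        · rintro i (rfl | rfl)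
          · exact Or.inr ⟨_, rfl⟩
          · exact Or.inl rfl
      let y : EndSp A := ⟨_, Or.inr ⟨n, hn, hz⟩⟩
      refine ⟨y, hN y fun i hi => Function.update_of_ne (by omega) _ _, fun hy => ?_⟩
      have h1 := (evAdm_of_rankSet 0 y hz hy).2.2.1 (2 * (N + n) + 1) (by
        change _ ∈ supp (Function.update (topPt hn).1 (2 * (N + n) + 1) true)
        rw [supp_update]
        exact Set.mem_insert _ _)
      rcases h1 with h1 | h1
      · omega
      · exact absurd h1 (by simp)
    · have h1 := evAdm_of_rankSet (n + 2) _ (by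
        rw [supp_topPt]; exact (evAdm_singleton (k := 0) (by omega)).adm) h
      rw [supp_topPt] at h1
      have h2 := h1.2.2.2 {n} (by simp)
      simp at h2

theorem endSp_homeo {A A' : Set ℕ} (e : EndSp A ≃ₜ EndSp A') : A = A' := by
  rw [← markedRanks_endSp A, ← markedRanks_endSp A', markedRanks_homeo e]

/-! ### The forest of finite approximations -/

/-- The vertices of the forest: pairs of a level `j` and an admissible subset of `{0, …, j - 1}`,
viewed as the approximation of level `j` of the admissible sets extending it. -/
def Vtx : Type := {p : ℕ × Finset ℕ // (∀ i ∈ p.2, i < p.1) ∧ ∃ n, Adm n (p.2 : Set ℕ)}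

namespace Vtx

/-- The level of a vertex. -/
def lev (s : Vtx) : ℕ := s.1.1

/-- The finite set of a vertex. -/
def set (s : Vtx) : Set ℕ := (s.1.2 : Set ℕ)

instance : Countable Vtx := inferInstanceAs (Countable {_p : ℕ × Finset ℕ // _})

theorem exists_adm (s : Vtx) : ∃ n, Adm n s.set := s.2.2

/-- The least element of the set of a vertex; it is the index of the tree containing the vertex. -/
noncomputable def idx (s : Vtx) : ℕ := s.exists_adm.choose

theorem adm (s : Vtx) : Adm s.idx s.set := s.exists_adm.choose_spec

theorem lt_lev {s : Vtx} {i : ℕ} (h : i ∈ s.set) : i < s.lev := s.2.1 i h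

theorem idx_lt (s : Vtx) : s.idx < s.lev := lt_lev s.adm.1

theorem ext' {s t : Vtx} (h1 : s.lev = t.lev) (h2 : s.set = t.set) : s = t :=
  Subtype.ext (Prod.ext h1 (Finset.coe_injective h2))

/-- The order of the forest: the set of `s` is the trace of that of `t` below the level of `s`. -/
def le (s t : Vtx) : Prop := s.lev ≤ t.lev ∧ ∀ i < s.lev, (i ∈ s.set ↔ i ∈ t.set)

theorem le_refl (s : Vtx) : s.le s := ⟨_root_.le_refl _, fun _ _ => Iff.rfl⟩

theorem le.trans {s t v : Vtx} (h : s.le t) (h' : t.le v) : s.le v :=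
  ⟨h.1.trans h'.1, fun i hi => (h.2 i hi).trans (h'.2 i (lt_of_lt_of_le hi h.1))⟩

theorem le.eq {s t : Vtx} (h : s.le t) (hl : t.lev ≤ s.lev) : s = t := by
  have hl' := le_antisymm h.1 hl
  refine ext' hl' (Set.ext fun i => ?_)
  by_cases hi : i < s.lev
  · exact h.2 i hi
  · exact ⟨fun h' => absurd (lt_lev h') hi, fun h' => absurd (lt_lev h') (hl' ▸ hi)⟩

/-- Two vertices below a common one are comparable. -/
theorem le_of_le {s t v : Vtx} (hs : s.le v) (ht : t.le v) (hl : s.lev ≤ t.lev) : s.le t :=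
  ⟨hl, fun i hi => (hs.2 i hi).trans (ht.2 i (lt_of_lt_of_le hi hl)).symm⟩

theorem le.subset {s t : Vtx} (h : s.le t) : s.set ⊆ t.set :=
  fun i hi => (h.2 i (lt_lev hi)).1 hi

theorem le.idx_eq {s t : Vtx} (h : s.le t) : s.idx = t.idx := by
  have h1 := t.adm.2.1 _ (h.subset s.adm.1)
  have h2 : t.idx ∈ s.set := (h.2 _ (lt_of_le_of_lt h1 s.idx_lt)).2 t.adm.1
  exact le_antisymm (s.adm.2.1 _ h2) h1

open Classical in
/-- The vertex of level `j` determined by the initial segment of `X`. -/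
noncomputable def ofSet {n : ℕ} {X : Set ℕ} (hX : Adm n X) (j : ℕ) (hj : n < j) : Vtx :=
  ⟨(j, (Finset.range j).filter (· ∈ X)), by simp; omega, n, hX.mono (by intro i; simp) (by
    simp [hj, hX.1])⟩

section
variable {n : ℕ} {X : Set ℕ} (hX : Adm n X) (j : ℕ) (hj : n < j)

theorem lev_ofSet : (ofSet hX j hj).lev = j := rfl

theorem mem_ofSet {i : ℕ} : i ∈ (ofSet hX j hj).set ↔ i < j ∧ i ∈ X := by
  simp [ofSet, set]

theorem idx_ofSet : (ofSet hX j hj).idx = n := by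
  refine (ofSet hX j hj).adm.unique (hX.mono (fun i hi => ((mem_ofSet hX j hj).1 hi).2) ?_)
  exact (mem_ofSet hX j hj).2 ⟨hj, hX.1⟩
end

theorem finite_lev (j : ℕ) : {s : Vtx | s.lev = j}.Finite := by
  have : Set.InjOn (fun s : Vtx => s.1.2) {s : Vtx | s.lev = j} := by
    intro s hs t ht h
    exact ext' (hs.trans ht.symm) (congrArg (fun S : Finset ℕ => (S : Set ℕ)) h)
  refine Set.Finite.of_finite_image (Set.Finite.subset (Finset.finite_toSet (Finset.range j).powerset) ?_) this
  rintro _ ⟨s, hs, rfl⟩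
  simp only [Finset.coe_powerset, Set.mem_preimage, Set.mem_powerset_iff, Finset.coe_subset]
  intro i hi
  have := s.2.1 i hi
  rw [Finset.mem_range]
  exact lt_of_lt_of_eq this hs

theorem finite_ch (s : Vtx) : {t : Vtx | t.lev = s.lev + 1 ∧ s.le t}.Finite :=
  (finite_lev (s.lev + 1)).subset fun _ h => h.1

/-- The children of a vertex. -/
noncomputable def ch (s : Vtx) : Finset Vtx := (finite_ch s).toFinset

theorem mem_ch {s t : Vtx} : t ∈ s.ch ↔ t.lev = s.lev + 1 ∧ s.le t := by
  simp [ch]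

theorem card_ch (s : Vtx) : s.ch.card ≤ 2 := by
  classical
  have := Finset.card_le_card_of_injOn (s := s.ch) (t := (Finset.univ : Finset Prop))
    (fun t => s.lev ∈ t.set) (fun _ _ => Finset.mem_coe.2 (Finset.mem_univ _)) (by
      intro t ht v hv h
      have ht := mem_ch.1 ht
      have hv := mem_ch.1 hv
      refine ext' (ht.1.trans hv.1.symm) (Set.ext fun i => ?_)
      rcases lt_trichotomy i s.lev with hi | rfl | hi
      · exact (ht.2.2 i hi).symm.trans (hv.2.2 i hi)
      · exact iff_of_eq h
      · exact ⟨fun h => absurd (lt_lev h) (by omega), fun h => absurd (lt_lev h) (by omega)⟩)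
  simpa using this

/-- Between two comparable vertices there is one of each intermediate level. -/
theorem exists_between {s t : Vtx} (h : s.le t) {j : ℕ} (h1 : s.lev ≤ j) (h2 : j ≤ t.lev) :
    ∃ v : Vtx, v.lev = j ∧ s.le v ∧ v.le t := by
  have hj : t.idx < j := by
    rw [← h.idx_eq]
    exact lt_of_lt_of_le s.idx_lt h1
  refine ⟨ofSet t.adm j hj, rfl, ⟨h1, fun i hi => ?_⟩, h2, fun i hi => ?_⟩
  · rw [mem_ofSet, h.2 i hi]
    exact ⟨fun h => ⟨by omega, h⟩, fun h => h.2⟩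
  · rw [mem_ofSet]
    exact ⟨fun h => h.2, fun h => ⟨hi, h⟩⟩

end Vtx

open Vtx

/-- The flows on the forest with weighted total mass at most `L`: nonnegative functions whose value
at a vertex is the sum of the values at its children. The bound is imposed on finite partial sums,
so that it includes convergence. -/
def Flows (c : Vtx → ℝ) (L : ℝ) : Set (Vtx → ℝ) :=
  {m | (∀ s, 0 ≤ m s) ∧ (∀ s, m s = ∑ t ∈ s.ch, m t) ∧ ∀ F : Finset Vtx, ∑ s ∈ F, c s * m s ≤ L}

/-- A flow does not increase on the way up; the induction is on the difference of levels. -/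
theorem flow_anti {m : Vtx → ℝ} (h0 : ∀ s, 0 ≤ m s) (hadd : ∀ s, m s = ∑ t ∈ s.ch, m t)
    {s : Vtx} (k : ℕ) : ∀ t : Vtx, t.lev = s.lev + k → s.le t → m t ≤ m s := by
  induction k with
  | zero =>
    intro t hl h
    rw [h.eq (by omega)]
  | succ k ih =>
    intro t hl h
    obtain ⟨v, hv, hsv, hvt⟩ := exists_between h (j := s.lev + k) (by omega) (by omega)
    refine le_trans ?_ (ih v hv hsv)
    rw [hadd v]
    exact Finset.single_le_sum (f := m) (fun t _ => h0 t) (mem_ch.2 ⟨by omega, hvt⟩)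

theorem flow_le {m : Vtx → ℝ} (h0 : ∀ s, 0 ≤ m s) (hadd : ∀ s, m s = ∑ t ∈ s.ch, m t)
    {s t : Vtx} (h : s.le t) : m t ≤ m s :=
  flow_anti h0 hadd (t.lev - s.lev) t (by have := h.1; omega) h

open Classical in
/-- The part of a flow `m` which passes through `s₀`. -/
noncomputable def restr (m : Vtx → ℝ) (s₀ t : Vtx) : ℝ :=
  if s₀.le t then m t else if t.le s₀ then m s₀ else 0

theorem restr_nonneg {m : Vtx → ℝ} (h0 : ∀ s, 0 ≤ m s) (s₀ t : Vtx) : 0 ≤ restr m s₀ t := by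
  unfold restr
  split_ifs
  exacts [h0 _, h0 _, le_rfl]

theorem restr_le {m : Vtx → ℝ} (h0 : ∀ s, 0 ≤ m s) (hadd : ∀ s, m s = ∑ t ∈ s.ch, m t)
    (s₀ t : Vtx) : restr m s₀ t ≤ m t := by
  unfold restr
  split_ifs with h1 h2
  exacts [le_rfl, flow_le h0 hadd h2, h0 _]

theorem restr_add {m : Vtx → ℝ} (hadd : ∀ s, m s = ∑ t ∈ s.ch, m t)
    (s₀ s : Vtx) : restr m s₀ s = ∑ t ∈ s.ch, restr m s₀ t := by
  by_cases h1 : s₀.le s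
  · rw [restr, if_pos h1, hadd s]
    refine Finset.sum_congr rfl fun t ht => ?_
    rw [restr, if_pos (h1.trans (mem_ch.1 ht).2)]
  · by_cases h2 : s.le s₀
    · rw [restr, if_neg h1, if_pos h2]
      have hlt : s.lev < s₀.lev := by
        by_contra hcon
        exact h1 (h2.eq (by omega) ▸ le_refl _)
      obtain ⟨v, hv, hsv, hvs⟩ := exists_between h2 (j := s.lev + 1) (by omega) (by omega)
      rw [Finset.sum_eq_single v]
      · rw [restr]
        split_ifs with h3
        · rw [h3.eq (by have := hvs.1; omega)]
        · rfl
      · intro t ht htv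
        have ht := mem_ch.1 ht
        have hts : ¬ t.le s₀ := fun h =>
          htv ((le_of_le h hvs (by omega)).eq (by omega))
        have hst : ¬ s₀.le t := fun h => hts (h.eq (by omega) ▸ le_refl _)
        rw [restr, if_neg hst, if_neg hts]
      · exact fun h => absurd (mem_ch.2 ⟨hv, hsv⟩) h
    · rw [restr, if_neg h1, if_neg h2]
      refine (Finset.sum_eq_zero fun t ht => ?_).symm
      have ht := mem_ch.1 ht
      have hts : ¬ t.le s₀ := fun h => h2 (ht.2.trans h)
      have hst : ¬ s₀.le t := fun h => by
        by_cases hl : s₀.lev ≤ s.lev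
        · exact h1 (le_of_le h ht.2 hl)
        · exact hts (h.eq (by omega) ▸ le_refl _)
      rw [restr, if_neg hst, if_neg hts]

/-! ### The extreme flows -/

/-- The vertex `s` lies on the path to the end `x`. -/
def On (s : Vtx) (x : ℕ → Bool) : Prop := ∀ i < s.lev, (i ∈ s.set ↔ i ∈ supp x)

theorem On.eq_ofSet {s : Vtx} {x : ℕ → Bool} {n : ℕ} (hx : Adm n (supp x)) (h : On s x) :
    ∃ hj : n < s.lev, s = ofSet hx s.lev hj := by
  have h1 := hx.2.1 _ ((h _ s.idx_lt).1 s.adm.1)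
  have hj : n < s.lev := lt_of_le_of_lt h1 s.idx_lt
  refine ⟨hj, ext' rfl (Set.ext fun i => ?_)⟩
  rw [mem_ofSet]
  exact ⟨fun hi => ⟨lt_lev hi, (h i (lt_lev hi)).1 hi⟩, fun hi => (h i hi.1).2 hi.2⟩

theorem on_ofSet {x : ℕ → Bool} {n : ℕ} (hx : Adm n (supp x)) (j : ℕ) (hj : n < j) :
    On (ofSet hx j hj) x := fun i hi => by
  rw [mem_ofSet]
  exact ⟨fun h => h.2, fun h => ⟨hi, h⟩⟩

theorem On.idx_eq {s : Vtx} {x : ℕ → Bool} {n : ℕ} (hx : Adm n (supp x)) (h : On s x) :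
    s.idx = n := by
  obtain ⟨hj, hs⟩ := h.eq_ofSet hx
  rw [hs, idx_ofSet]

/-- A flow carried by a single path is constant along it. -/
theorem flow_carried {m : Vtx → ℝ} (hadd : ∀ s, m s = ∑ t ∈ s.ch, m t) {x : ℕ → Bool} {n : ℕ}
    (hx : Adm n (supp x)) (hm : ∀ s, m s ≠ 0 → On s x) :
    ∀ s, On s x → m s = m (ofSet hx (n + 1) (Nat.lt_succ_self n)) := by
  have key : ∀ j (hj : n < j), m (ofSet hx j hj) = m (ofSet hx (n + 1) (Nat.lt_succ_self n)) := by
    intro j hj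
    induction j, (show n + 1 ≤ j from hj) using Nat.le_induction with
    | base => rfl
    | succ j hj' ih =>
      rw [← ih hj', hadd (ofSet hx j hj')]
      refine (Finset.sum_eq_single_of_mem (ofSet hx (j + 1) hj) ?_ ?_).symm
      · refine mem_ch.2 ⟨rfl, ⟨Nat.le_succ j, fun i hi => ?_⟩⟩
        rw [lev_ofSet] at hi
        rw [mem_ofSet, mem_ofSet]
        exact and_congr_left fun _ => ⟨fun _ => by omega, fun _ => hi⟩
      · intro t ht hne
        by_contra h0
        obtain ⟨h1, h2⟩ := (hm t h0).eq_ofSet hx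
        have hl : t.lev = j + 1 := (mem_ch.1 ht).1
        refine hne (ext' hl (Set.ext fun i => ?_))
        rw [h2, mem_ofSet, mem_ofSet, hl]
  intro s hs
  obtain ⟨hj, h⟩ := hs.eq_ofSet hx
  rw [h]
  exact key _ hj

/-- The weight of the vertex of level `j` on a path in the tree number `n`; this tree starts at
level `n + 1`. -/
noncomputable def lw (w : ℕ → ℕ → ℝ) (n j : ℕ) : ℝ := if n < j then w n j else 0

/-- The total weight of an infinite path in the tree number `n`. -/
noncomputable def tw (w : ℕ → ℕ → ℝ) (n : ℕ) : ℝ := ∑' j, lw w n j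

/-- The trees whose infinite paths have finite total weight. -/
def active (w : ℕ → ℕ → ℝ) : Set ℕ := {n | Summable (lw w n)}

/-- The weight of a vertex; it only depends on its tree and on its level. -/
noncomputable def vwt (w : ℕ → ℕ → ℝ) (s : Vtx) : ℝ := w s.idx s.lev

open Classical in
/-- The flow along the path to the end `x` which exhausts the budget `L`. For the empty end it is
the zero flow. -/
noncomputable def pointFlow (w : ℕ → ℕ → ℝ) (L : ℝ) (x : ℕ → Bool) (s : Vtx) : ℝ :=
  if On s x then L / tw w s.idx else 0

section Extreme
variable {w : ℕ → ℕ → ℝ} (hw : ∀ n j, 0 < w n j) {L : ℝ} (hL : 0 < L)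
include hw

theorem lw_nonneg (n j : ℕ) : 0 ≤ lw w n j := by
  unfold lw
  split_ifs
  exacts [(hw _ _).le, le_rfl]

theorem tw_pos {n : ℕ} (hn : n ∈ active w) : 0 < tw w n :=
  hn.tsum_pos (lw_nonneg hw n) (n + 1) (by simp [lw, hw])

omit hw in
/-- The budget of a flow bounds the weight of a path along which the flow is constant. -/
theorem flow_budget {m : Vtx → ℝ} (hm : m ∈ Flows (vwt w) L) {x : ℕ → Bool} {n : ℕ}
    (hx : Adm n (supp x)) {a : ℝ} (ha : ∀ s, On s x → m s = a) (J : Finset ℕ) :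
    ∑ j ∈ J, lw w n j * a ≤ L := by
  classical
  let v : ℕ → Vtx := fun j => if h : n < j then ofSet hx j h else ofSet hx (n + 1) (by omega)
  have hv : ∀ j, n < j → (v j).lev = j := fun j hj => by simp [v, hj, lev_ofSet]
  have hinj : Set.InjOn v (J.filter (n < ·)) := by
    intro i hi j hj h
    simp only [Finset.coe_filter, Set.mem_ofPred_eq] at hi hj
    rw [← hv i hi.2, h, hv j hj.2]
  have h1 := hm.2.2 ((J.filter (n < ·)).image v)
  rw [Finset.sum_image hinj] at h1
  refine le_trans (le_of_eq ?_) h1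
  rw [Finset.sum_filter]
  refine Finset.sum_congr rfl fun j _ => ?_
  unfold lw
  split_ifs with hj
  · simp only [v, dif_pos hj, vwt, idx_ofSet, lev_ofSet]
    rw [ha _ (on_ofSet hx j hj)]
  · simp

end Extreme

theorem continuous_pointFlow (w : ℕ → ℕ → ℝ) (L : ℝ) : Continuous (pointFlow w L) := by
  refine continuous_pi fun s => continuous_iff_continuousAt.2 fun x => ?_
  refine (continuousAt_const (y := pointFlow w L x s)).congr ?_
  filter_upwards [cyl_mem_nhds x s.lev] with y hy
  have : On s x ↔ On s y := by
    refine forall₂_congr fun i hi => ?_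
    simp only [supp, Set.mem_ofPred_eq]
    rw [hy i hi]
  show pointFlow w L x s = pointFlow w L y s
  unfold pointFlow
  by_cases h : On s x
  · rw [if_pos h, if_pos (this.1 h)]
  · rw [if_neg h, if_neg (mt this.2 h)]

section Extreme
variable {w : ℕ → ℕ → ℝ} (hw : ∀ n j, 0 < w n j) {L : ℝ} (hL : 0 < L)
include hw hL

theorem pointFlow_injOn : Set.InjOn (pointFlow w L) (EndSp (active w)) := by
  have key : ∀ x ∈ EndSp (active w), ∀ y, pointFlow w L x = pointFlow w L y → supp x ⊆ supp y := by
    intro x hx y h i hi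
    rcases hx with hx | ⟨n, hn, hx⟩
    · simp [hx] at hi
    · have h1 := congrFun h (ofSet hx (n + i + 1) (by omega))
      rw [pointFlow, if_pos (on_ofSet _ _ _), idx_ofSet, pointFlow] at h1
      have h2 : 0 < L / tw w n := div_pos hL (tw_pos hw hn)
      split_ifs at h1 with h3
      · refine (h3 i (by rw [lev_ofSet]; omega)).1 ((mem_ofSet _ _ _).2 ⟨by omega, hi⟩)
      · linarith
  intro x hx y hy h
  exact supp_injective (Set.Subset.antisymm (key x hx y h) (key y hy x h.symm))

theorem pointFlow_mem {x : ℕ → Bool} (hx : x ∈ EndSp (active w)) :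
    pointFlow w L x ∈ Flows (vwt w) L := by
  classical
  have hnn : ∀ s, 0 ≤ pointFlow w L x s := fun s => by
    unfold pointFlow
    split_ifs
    · exact div_nonneg hL.le (tsum_nonneg fun j => lw_nonneg hw _ j)
    · exact le_rfl
  refine ⟨hnn, fun s => ?_, fun F => ?_⟩
  · by_cases hs : On s x
    · rw [pointFlow, if_pos hs]
      have hx' : Adm s.idx (supp x) := by
        rcases hx with hx | ⟨n, hn, hx⟩
        · have := (hs _ s.idx_lt).1 s.adm.1
          simp [hx] at this
        · rwa [hs.idx_eq hx]
      have hj : s.idx < s.lev + 1 := by have := s.idx_lt; omega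
      rw [Finset.sum_eq_single_of_mem (ofSet hx' (s.lev + 1) hj)]
      · rw [pointFlow, if_pos (on_ofSet _ _ _), idx_ofSet]
      · refine mem_ch.2 ⟨rfl, Nat.le_succ _, fun i hi => ?_⟩
        rw [mem_ofSet, hs i hi]
        exact ⟨fun h => ⟨by omega, h⟩, fun h => h.2⟩
      · intro t ht hne
        refine if_neg fun h => hne ?_
        obtain ⟨h1, h2⟩ := h.eq_ofSet hx'
        have hl : t.lev = s.lev + 1 := (mem_ch.1 ht).1
        refine ext' hl (Set.ext fun i => ?_)
        rw [h2, mem_ofSet, mem_ofSet, hl]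
    · rw [pointFlow, if_neg hs]
      refine (Finset.sum_eq_zero fun t ht => if_neg fun h => hs fun i hi => ?_).symm
      have ht := mem_ch.1 ht
      exact (ht.2.2 i hi).trans (h i (by omega))
  · rcases hx with hx | ⟨n, hn, hx⟩
    · refine le_trans (le_of_eq (Finset.sum_eq_zero fun s _ => ?_)) hL.le
      rw [pointFlow, if_neg, mul_zero]
      intro hs
      have := (hs _ s.idx_lt).1 s.adm.1
      simp [hx] at this
    · have h1 : ∑ s ∈ F, vwt w s * pointFlow w L x s =
          ∑ s ∈ F.filter (On · x), lw w n s.lev * (L / tw w n) := by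
        rw [Finset.sum_filter]
        refine Finset.sum_congr rfl fun s _ => ?_
        unfold pointFlow
        split_ifs with hs
        · rw [hs.idx_eq hx, vwt, lw, hs.idx_eq hx, if_pos (hs.eq_ofSet hx).1]
        · simp
      have hinj : Set.InjOn Vtx.lev (F.filter (On · x)) := by
        intro s hs t ht h
        simp only [Finset.coe_filter, Set.mem_ofPred_eq] at hs ht
        refine ext' h (Set.ext fun i => ?_)
        by_cases hi : i < s.lev
        · exact (hs.2 i hi).trans (ht.2 i (h ▸ hi)).symm
        · exact ⟨fun h' => absurd (lt_lev h') hi, fun h' => absurd (lt_lev h') (h ▸ hi)⟩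
      rw [h1, ← Finset.sum_mul, ← Finset.sum_image (f := lw w n) hinj]
      have h2 : ∑ j ∈ (F.filter (On · x)).image Vtx.lev, lw w n j ≤ tw w n :=
        Summable.sum_le_tsum _ (fun j _ => lw_nonneg hw n j) hn
      have h3 := tw_pos hw hn
      calc _ ≤ tw w n * (L / tw w n) :=
            mul_le_mul_of_nonneg_right h2 (div_nonneg hL.le h3.le)
        _ = L := by field_simp

omit hL in
theorem carried_le {m : Vtx → ℝ} (hm : m ∈ Flows (vwt w) L) {x : ℕ → Bool} {n : ℕ}
    (hn : n ∈ active w) (hx : Adm n (supp x)) {a : ℝ} (ha : ∀ s, On s x → m s = a) :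
    a ≤ L / tw w n := by
  rw [le_div_iff₀ (tw_pos hw hn), mul_comm]
  have h1 : HasSum (fun j => lw w n j * a) (tw w n * a) := (Summable.hasSum hn).mul_right a
  exact hasSum_le_of_sum_le h1 (flow_budget hm hx ha)

/-- Two flows with the mean `pointFlow w L x` are carried by the same path and can not exceed the
budget, so both are equal to it. -/
theorem pointFlow_extreme {x : ℕ → Bool} (hx : x ∈ EndSp (active w)) :
    pointFlow w L x ∈ Set.extremePoints ℝ (Flows (vwt w) L) := by
  rw [mem_extremePoints_iff_left]
  refine ⟨pointFlow_mem hw hL hx, ?_⟩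
  rintro m₁ h₁ m₂ h₂ ⟨a, b, ha, hb, hab, h⟩
  have hz : ∀ s, pointFlow w L x s = 0 → m₁ s = 0 ∧ m₂ s = 0 := by
    intro s hs
    have h3 := congrFun h s
    simp only [Pi.add_apply, Pi.smul_apply, smul_eq_mul, hs] at h3
    have h4 := mul_nonneg ha.le (h₁.1 s)
    have h5 := mul_nonneg hb.le (h₂.1 s)
    have h6 : a * m₁ s = 0 := by linarith
    have h7 : b * m₂ s = 0 := by linarith
    exact ⟨(mul_eq_zero.1 h6).resolve_left ha.ne', (mul_eq_zero.1 h7).resolve_left hb.ne'⟩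
  have hz' : ∀ s, ¬ On s x → m₁ s = 0 ∧ m₂ s = 0 := fun s hs => hz s (if_neg hs)
  funext s
  by_cases hs : On s x
  · have hs' := hs
    rcases hx with hx | ⟨n, hn, hx⟩
    · have := (hs _ s.idx_lt).1 s.adm.1
      simp [hx] at this
    · have c₁ := flow_carried h₁.2.1 hx (fun s h0 => by_contra fun h => h0 (hz' s h).1)
      have c₂ := flow_carried h₂.2.1 hx (fun s h0 => by_contra fun h => h0 (hz' s h).2)
      have l₁ := carried_le hw h₁ hn hx c₁
      have l₂ := carried_le hw h₂ hn hx c₂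
      rw [← c₁ s hs] at l₁
      rw [← c₂ s hs] at l₂
      have h3 := congrFun h s
      simp only [Pi.add_apply, Pi.smul_apply, smul_eq_mul] at h3
      rw [pointFlow, if_pos hs, hs.idx_eq hx] at h3 ⊢
      refine le_antisymm l₁ ?_
      by_contra hcon
      push Not at hcon
      have h4 := mul_lt_mul_of_pos_left hcon ha
      have h5 := mul_le_mul_of_nonneg_left l₂ hb.le
      have h6 : a * (L / tw w n) + b * (L / tw w n) = L / tw w n := by rw [← add_mul, hab, one_mul]
      linarith
  · rw [(hz' s hs).1, pointFlow, if_neg hs]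

omit hL in
/-- The support of an extreme flow is a chain: otherwise the flow decomposes into the part passing
through `s₀` and the rest, both of which can be rescaled to the same total weight. -/
theorem extreme_comparable {m : Vtx → ℝ} (hm : m ∈ Set.extremePoints ℝ (Flows (vwt w) L))
    {s₀ s : Vtx} (h₀ : m s₀ ≠ 0) (hs : m s ≠ 0) : s₀.le s ∨ s.le s₀ := by
  rw [mem_extremePoints_iff_left] at hm
  obtain ⟨hmF, hext⟩ := hm
  have hc : ∀ s, 0 < vwt w s := fun s => hw _ _
  have hr0 := restr_nonneg hmF.1 s₀
  have hrle := restr_le hmF.1 hmF.2.1 s₀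
  have hsum : Summable fun s => vwt w s * m s :=
    summable_of_sum_le (fun s => mul_nonneg (hc s).le (hmF.1 s)) hmF.2.2
  have hsum1 : Summable fun s => vwt w s * restr m s₀ s :=
    hsum.of_nonneg_of_le (fun s => mul_nonneg (hc s).le (hr0 s))
      fun s => mul_le_mul_of_nonneg_left (hrle s) (hc s).le
  have hsum2 : Summable fun s => vwt w s * (m s - restr m s₀ s) := by
    simpa only [mul_sub] using hsum.sub hsum1
  set T := ∑' s, vwt w s * m s with hT
  set T1 := ∑' s, vwt w s * restr m s₀ s with hT1
  set T2 := ∑' s, vwt w s * (m s - restr m s₀ s) with hT2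
  have hTT : T = T1 + T2 := by
    rw [hT, hT1, hT2, ← hsum1.tsum_add hsum2]
    exact tsum_congr fun s => by ring
  have hTL : T ≤ L := hsum.tsum_le_of_sum_le hmF.2.2
  have hs0 : restr m s₀ s₀ = m s₀ := by rw [restr, if_pos (Vtx.le_refl _)]
  have hm0 : 0 < m s₀ := lt_of_le_of_ne (hmF.1 _) h₀.symm
  have hT1p : 0 < T1 := hsum1.tsum_pos (fun s => mul_nonneg (hc s).le (hr0 s)) s₀
    (mul_pos (hc _) (by rwa [hs0]))
  by_contra hcon
  push Not at hcon
  have hrs : restr m s₀ s = 0 := by rw [restr, if_neg hcon.1, if_neg hcon.2]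
  have hT2p : 0 < T2 := hsum2.tsum_pos
    (fun s => mul_nonneg (hc s).le (sub_nonneg.2 (hrle s))) s
    (mul_pos (hc _) (by rw [hrs, sub_zero]; exact lt_of_le_of_ne (hmF.1 _) hs.symm))
  have hTp : 0 < T := by linarith
  -- both parts, rescaled to total weight `T`, are flows within the budget
  have hF1 : (fun s => T / T1 * restr m s₀ s) ∈ Flows (vwt w) L := by
    refine ⟨fun s => mul_nonneg (by positivity) (hr0 s), fun s => ?_, fun F => ?_⟩
    · show T / T1 * restr m s₀ s = ∑ t ∈ s.ch, T / T1 * restr m s₀ t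
      rw [restr_add hmF.2.1, Finset.mul_sum]
    · calc ∑ s ∈ F, vwt w s * (T / T1 * restr m s₀ s)
          = T / T1 * ∑ s ∈ F, vwt w s * restr m s₀ s := by
            rw [Finset.mul_sum]; exact Finset.sum_congr rfl fun s _ => by ring
        _ ≤ T / T1 * T1 := mul_le_mul_of_nonneg_left
            (hsum1.sum_le_tsum _ fun s _ => mul_nonneg (hc s).le (hr0 s)) (by positivity)
        _ = T := by field_simp
        _ ≤ L := hTL
  have hF2 : (fun s => T / T2 * (m s - restr m s₀ s)) ∈ Flows (vwt w) L := by
    refine ⟨fun s => mul_nonneg (by positivity) (sub_nonneg.2 (hrle s)), fun s => ?_, fun F => ?_⟩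
    · show T / T2 * (m s - restr m s₀ s) = ∑ t ∈ s.ch, T / T2 * (m t - restr m s₀ t)
      rw [restr_add hmF.2.1 s₀ s]
      conv_lhs => rw [hmF.2.1 s]
      rw [← Finset.sum_sub_distrib, Finset.mul_sum]
    · calc ∑ s ∈ F, vwt w s * (T / T2 * (m s - restr m s₀ s))
          = T / T2 * ∑ s ∈ F, vwt w s * (m s - restr m s₀ s) := by
            rw [Finset.mul_sum]; exact Finset.sum_congr rfl fun s _ => by ring
        _ ≤ T / T2 * T2 := mul_le_mul_of_nonneg_left
            (hsum2.sum_le_tsum _ fun s _ => mul_nonneg (hc s).le (sub_nonneg.2 (hrle s)))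
            (by positivity)
        _ = T := by field_simp
        _ ≤ L := hTL
  have heq := hext _ hF1 _ hF2 ⟨T1 / T, T2 / T, by positivity, by positivity, by
    rw [← add_div, ← hTT, div_self hTp.ne'], by
    funext s
    simp only [Pi.add_apply, Pi.smul_apply, smul_eq_mul]
    field_simp
    ring⟩
  have h1 := congrFun heq s
  simp only [hrs, mul_zero] at h1
  exact hs h1.symm

/-- A nonzero extreme flow is carried by a single path, which has finite weight as the flow has
finite budget; and it exhausts the budget, not being a proper mean of `0` and the full flow. -/
theorem extreme_eq_pointFlow {m : Vtx → ℝ} (hm : m ∈ Set.extremePoints ℝ (Flows (vwt w) L)) :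
    ∃ x ∈ EndSp (active w), pointFlow w L x = m := by
  classical
  by_cases hzero : m = 0
  · refine ⟨fun _ => false, Or.inl (by ext; simp [supp]), ?_⟩
    subst hzero
    funext s
    refine if_neg fun hs => ?_
    have := (hs _ s.idx_lt).1 s.adm.1
    simp [supp] at this
  obtain ⟨s₀, hs₀⟩ := Function.ne_iff.1 hzero
  have hs₀ : m s₀ ≠ 0 := hs₀
  have hmF := hm.1
  -- the union of the sets in the support of `m` is the end that carries `m`
  let x : ℕ → Bool := fun i => decide (∃ t, m t ≠ 0 ∧ i ∈ t.set)
  have hxs : ∀ i, i ∈ supp x ↔ ∃ t, m t ≠ 0 ∧ i ∈ t.set := fun i => by simp [supp, x]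
  have hon : ∀ s, m s ≠ 0 → On s x := by
    intro s hs i hi
    rw [hxs]
    refine ⟨fun h => ⟨s, hs, h⟩, ?_⟩
    rintro ⟨t, ht, hit⟩
    rcases extreme_comparable hw hm hs ht with h | h
    · exact (h.2 i hi).2 hit
    · exact h.subset hit
  have hidx : ∀ s, m s ≠ 0 → s.idx = s₀.idx := by
    intro s hs
    rcases extreme_comparable hw hm hs hs₀ with h | h
    · exact h.idx_eq
    · exact h.idx_eq.symm
  have hdeep : ∀ k, ∃ s, m s ≠ 0 ∧ s.lev = s₀.lev + k := by
    intro k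
    induction k with
    | zero => exact ⟨s₀, hs₀, rfl⟩
    | succ k ih =>
      obtain ⟨s, hs, hl⟩ := ih
      rw [hmF.2.1 s] at hs
      obtain ⟨t, ht, htm⟩ := Finset.exists_ne_zero_of_sum_ne_zero hs
      exact ⟨t, htm, by rw [(mem_ch.1 ht).1, hl, add_assoc]⟩
  have hx : Adm s₀.idx (supp x) := by
    refine adm_of_frequently fun j₀ => ?_
    obtain ⟨s, hs, hl⟩ := hdeep j₀
    refine ⟨s.lev, by omega, ?_⟩
    have : supp x ∩ {i | i < s.lev} = s.set := by
      ext i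
      exact ⟨fun h => (hon s hs i h.2).2 h.1, fun h => ⟨(hon s hs i (lt_lev h)).1 h, lt_lev h⟩⟩
    rw [this, ← hidx s hs]
    exact s.adm
  have hcar := flow_carried hmF.2.1 hx hon
  set a := m (ofSet hx (s₀.idx + 1) (Nat.lt_succ_self _)) with ha
  have hapos : 0 < a := by
    rw [← hcar s₀ (hon s₀ hs₀)]
    exact lt_of_le_of_ne (hmF.1 _) hs₀.symm
  have hact : s₀.idx ∈ active w := by
    have h1 : Summable fun j => lw w s₀.idx j * a :=
      summable_of_sum_le (fun j => mul_nonneg (lw_nonneg hw _ j) hapos.le)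
        (flow_budget hmF hx hcar)
    exact (summable_mul_right_iff hapos.ne').1 h1
  have hxE : x ∈ EndSp (active w) := Or.inr ⟨_, hact, hx⟩
  refine ⟨x, hxE, ?_⟩
  have hle := carried_le hw hmF hact hx hcar
  have hW := tw_pos hw hact
  have hLW : 0 < L / tw w s₀.idx := div_pos hL hW
  have hmul : m = (a / (L / tw w s₀.idx)) • pointFlow w L x := by
    funext s
    simp only [Pi.smul_apply, smul_eq_mul]
    by_cases hs : On s x
    · rw [pointFlow, if_pos hs, hcar s hs, hs.idx_eq hx, div_mul_cancel₀ _ hLW.ne']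
    · rw [pointFlow, if_neg hs, mul_zero]
      by_contra h
      exact hs (hon s h)
  rcases hle.lt_or_eq with hlt | heq
  · exfalso
    have hβ : a / (L / tw w s₀.idx) < 1 := (div_lt_one hLW).2 hlt
    rw [mem_extremePoints_iff_left] at hm
    have h0 : (0 : Vtx → ℝ) ∈ Flows (vwt w) L :=
      ⟨fun _ => le_rfl, fun s => by simp, fun F => by simpa using hL.le⟩
    have := hm.2 0 h0 (pointFlow w L x) (pointFlow_mem hw hL hxE)
      ⟨1 - a / (L / tw w s₀.idx), a / (L / tw w s₀.idx), by linarith, by positivity, by ring, by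
        rw [smul_zero, zero_add, ← hmul]⟩
    exact hzero this.symm
  · rw [hmul, heq, div_self hLW.ne', one_smul]

theorem range_pointFlow :
    Set.extremePoints ℝ (Flows (vwt w) L) = pointFlow w L '' EndSp (active w) := by
  ext m
  constructor
  · exact fun hm => extreme_eq_pointFlow hw hL hm
  · rintro ⟨x, hx, rfl⟩
    exact pointFlow_extreme hw hL hx

omit hL in
theorem isCompact_flows : IsCompact (Flows (vwt w) L) := by
  have hc : ∀ s, 0 < vwt w s := fun s => hw _ _
  refine IsCompact.of_isClosed_subset
    (isCompact_univ_pi fun s : Vtx => isCompact_Icc (a := (0 : ℝ)) (b := L / vwt w s)) ?_ ?_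
  · have : Flows (vwt w) L = (⋂ s, {m | 0 ≤ m s}) ∩ ((⋂ s : Vtx, {m | m s = ∑ t ∈ s.ch, m t}) ∩
        ⋂ F : Finset Vtx, {m | ∑ s ∈ F, vwt w s * m s ≤ L}) := by
      ext m
      simp [Flows]
    rw [this]
    refine (isClosed_iInter fun s => ?_).inter ((isClosed_iInter fun s => ?_).inter
      (isClosed_iInter fun F => ?_))
    · exact isClosed_le continuous_const (continuous_apply s)
    · exact isClosed_eq (continuous_apply s) (by fun_prop)
    · exact isClosed_le (by fun_prop) continuous_const
  · intro m hm s _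
    refine ⟨hm.1 s, ?_⟩
    rw [le_div_iff₀ (hc s), mul_comm]
    simpa using hm.2.2 {s}

omit hw hL in
theorem convex_flows (c : Vtx → ℝ) : Convex ℝ (Flows c L) := by
  rintro m hm m' hm' a b ha hb hab
  refine ⟨fun s => ?_, fun s => ?_, fun F => ?_⟩
  · exact add_nonneg (mul_nonneg ha (hm.1 s)) (mul_nonneg hb (hm'.1 s))
  · simp only [Pi.add_apply, Pi.smul_apply, smul_eq_mul, Finset.sum_add_distrib, ← Finset.mul_sum]
    rw [← hm.2.1, ← hm'.2.1]
  · have h1 := mul_le_mul_of_nonneg_left (hm.2.2 F) ha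
    have h2 := mul_le_mul_of_nonneg_left (hm'.2.2 F) hb
    have h3 : ∑ s ∈ F, c s * (a • m + b • m') s =
        a * ∑ s ∈ F, c s * m s + b * ∑ s ∈ F, c s * m' s := by
      rw [Finset.mul_sum, Finset.mul_sum, ← Finset.sum_add_distrib]
      refine Finset.sum_congr rfl fun s _ => ?_
      simp only [Pi.add_apply, Pi.smul_apply, smul_eq_mul]
      ring
    have h4 : a * L + b * L = L := by rw [← add_mul, hab, one_mul]
    linarith

end Extreme

/-! ### The graph and its eigenvectors -/

/-- The vertices of the graph: the trunk `u 0, u 1, …`, the return road `z 0, z 1, …` leading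
back to `u 0`, and a vertex `b s` for every vertex `s` of the forest. -/
inductive Node : Type
  | u (k : ℕ)
  | z (k : ℕ)
  | b (s : Vtx)

/-- The forest vertices of level `k / 2` for even `k`, none for odd `k`; these are attached to
the trunk at `u k`. -/
noncomputable def hang (k : ℕ) : Finset Vtx :=
  ((finite_lev (k / 2)).subset (t := {s : Vtx | 2 * s.lev = k}) fun s hs => by
    have : 2 * s.lev = k := hs
    show s.lev = k / 2
    omega).toFinset

theorem mem_hang {k : ℕ} {s : Vtx} : s ∈ hang k ↔ 2 * s.lev = k := by
  simp [hang]

/-- The row of the matrix at a given vertex: `r k` edges lead from `u k` back to `u 0`, there are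
`e s` edges from the trunk to `b s`, and `b s` is connected to the return road at distance
`d (lev s)` from its end. -/
noncomputable def row (r : ℕ → ℕ) (e : Vtx → ℕ) (d : ℕ → ℕ) : Node → Node →₀ ℕ
  | .u k => Finsupp.single (.u (k + 1)) 1 + Finsupp.single (.u 0) (r k) +
      ∑ s ∈ hang k, Finsupp.single (.b s) (e s)
  | .z 0 => Finsupp.single (.u 0) 1
  | .z (k + 1) => Finsupp.single (.z k) 1
  | .b s => ∑ t ∈ s.ch, Finsupp.single (.b t) 1 + Finsupp.single (.z (d s.lev)) 1

section Pairing
variable {ι : Type} (ψ : ι → ℝ)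

theorem summable_pair (f : ι →₀ ℕ) : Summable fun j => (f j : ℝ) * ψ j :=
  summable_of_ne_finset_zero (s := f.support) fun j hj => by
    rw [Finsupp.notMem_support_iff.1 hj]; simp

/-- The pairing of a row with a vector. -/
noncomputable def pair : (ι →₀ ℕ) →+ ℝ where
  toFun f := ∑' j, (f j : ℝ) * ψ j
  map_zero' := by simp
  map_add' f g := by
    rw [← (summable_pair ψ f).tsum_add (summable_pair ψ g)]
    exact tsum_congr fun j => by simp [add_mul]

theorem pair_apply (f : ι →₀ ℕ) : pair ψ f = ∑' j, (f j : ℝ) * ψ j := rfl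

theorem pair_single (j : ι) (a : ℕ) : pair ψ (Finsupp.single j a) = a * ψ j := by
  rw [pair_apply, tsum_eq_single j]
  · simp
  · intro i hi
    rw [Finsupp.single_eq_of_ne hi]
    simp

theorem eq_zero_of_pair_nonpos (h0 : ∀ i, 0 ≤ ψ i) {f : ι →₀ ℕ} (hf : pair ψ f ≤ 0) {j : ι}
    (hj : f j ≠ 0) : ψ j = 0 := by
  have h1 : (f j : ℝ) * ψ j ≤ pair ψ f :=
    (summable_pair ψ f).le_tsum j fun i _ => mul_nonneg (Nat.cast_nonneg _) (h0 i)
  have h2 : (1 : ℝ) ≤ f j := by exact_mod_cast Nat.one_le_iff_ne_zero.2 hj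
  have h3 := h0 j
  nlinarith

end Pairing

section Graph
variable (r : ℕ → ℕ) (e : Vtx → ℕ) (d : ℕ → ℕ)

theorem row_b_ch {s t : Vtx} (ht : t ∈ s.ch) : row r e d (.b s) (.b t) ≠ 0 := by
  have : 1 ≤ (∑ t ∈ s.ch, Finsupp.single (Node.b t) 1 : Node →₀ ℕ) (.b t) := by
    rw [Finsupp.finsetSum_apply]
    refine le_trans ?_ (Finset.single_le_sum (fun _ _ => Nat.zero_le _) ht)
    simp
  rw [row, Finsupp.add_apply]
  omega

theorem row_b_z (s : Vtx) : row r e d (.b s) (.z (d s.lev)) ≠ 0 := by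
  rw [row, Finsupp.add_apply, Finsupp.single_eq_same]
  omega

theorem row_u_succ (k : ℕ) : row r e d (.u k) (.u (k + 1)) ≠ 0 := by
  rw [row, Finsupp.add_apply, Finsupp.add_apply, Finsupp.single_eq_same]
  omega

variable {e} in
theorem row_u_b (he : ∀ s, e s ≠ 0) (s : Vtx) : row r e d (.u (2 * s.lev)) (.b s) ≠ 0 := by
  have : e s ≤ (∑ t ∈ hang (2 * s.lev), Finsupp.single (Node.b t) (e t) : Node →₀ ℕ) (.b s) := by
    rw [Finsupp.finsetSum_apply]
    refine le_trans ?_ (Finset.single_le_sum (fun _ _ => Nat.zero_le _)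
      (mem_hang.2 rfl : s ∈ hang (2 * s.lev)))
    simp
  have := he s
  rw [row, Finsupp.add_apply]
  omega

variable {e d} in
/-- Irreducibility: the trunk leads to forest vertices of arbitrarily high level, these lead to
arbitrarily distant points of the return road, and the road leads to `u 0`. -/
theorem row_connected (he : ∀ s, e s ≠ 0) (hd : ∀ j, j ≤ d j) (n n' : Node) :
    Relation.TransGen (fun a b => row r e d a b ≠ 0) n n' := by
  set R := fun a b => row r e d a b ≠ 0 with hR
  have huu : ∀ k i, Relation.ReflTransGen R (.u k) (.u (k + i)) := by
    intro k i
    induction i with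
    | zero => exact .refl
    | succ i ih => exact ih.tail (row_u_succ r e d _)
  have hzz : ∀ k i, Relation.ReflTransGen R (.z (k + i)) (.z k) := by
    intro k i
    induction i with
    | zero => exact .refl
    | succ i ih => exact .head (by simp [hR, row, ← add_assoc]) ih
  have hzu : ∀ k, Relation.TransGen R (.z k) (.u 0) := by
    intro k
    refine Relation.TransGen.tail' ?_ (show R (.z 0) (.u 0) by simp [hR, row])
    simpa using hzz 0 k
  have hbu : ∀ s, Relation.TransGen R (.b s) (.u 0) := fun s =>
    .head (row_b_z r e d s) (hzu _)
  -- a forest vertex of prescribed level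
  have hv : ∀ j, ∃ s : Vtx, s.lev = j + 1 := fun j =>
    ⟨ofSet (n := 0) (X := {0}) (evAdm_singleton (k := 0) (by omega)).adm (j + 1) (by omega), rfl⟩
  have hub : ∀ k, ∃ s : Vtx, k ≤ s.lev ∧ Relation.TransGen R (.u k) (.b s) := by
    intro k
    obtain ⟨s, hs⟩ := hv k
    refine ⟨s, by omega, .tail' ?_ (row_u_b r d he s)⟩
    have := huu k (2 * s.lev - k)
    rwa [show k + (2 * s.lev - k) = 2 * s.lev by omega] at this
  have hto : ∀ n, Relation.TransGen R n (.u 0) := by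
    rintro (k | k | s)
    · obtain ⟨s, -, hs⟩ := hub k
      exact hs.trans (hbu s)
    · exact hzu k
    · exact hbu s
  have hfrom : ∀ n, Relation.ReflTransGen R (.u 0) n := by
    rintro (k | k | s)
    · simpa using huu 0 k
    · obtain ⟨s, hs⟩ := hv k
      have h1 := huu 0 (2 * s.lev)
      rw [Nat.zero_add] at h1
      refine ((h1.tail (row_u_b r d he s)).tail (row_b_z r e d s)).trans ?_
      have := hd s.lev
      have h2 := hzz k (d s.lev - k)
      rwa [show k + (d s.lev - k) = d s.lev by omega] at h2
    · have h1 := huu 0 (2 * s.lev)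
      rw [Nat.zero_add] at h1
      exact h1.tail (row_u_b r d he s)
  exact (hto n).trans_left (hfrom n')

/-- A nonnegative eigenvector of the matrix with rows `row r e d` for the eigenvalue `lam`. -/
def Eig (lam : ℝ) (ψ : Node → ℝ) : Prop :=
  (∀ n, 0 ≤ ψ n) ∧ ∀ n, pair ψ (row r e d n) = lam * ψ n

variable {r e d}

theorem Eig.eq_zero_of_nonpos {lam : ℝ} {ψ : Node → ℝ} (h : Eig r e d lam ψ) (hlam : lam ≤ 0)
    (he : ∀ s, e s ≠ 0) (hd : ∀ j, j ≤ d j) : ψ = 0 := by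
  funext n
  obtain ⟨n', -, hn'⟩ := (Relation.TransGen.tail'_iff).1 (row_connected r he hd n n)
  refine eq_zero_of_pair_nonpos ψ h.1 (f := row r e d n') ?_ hn'
  rw [h.2]
  exact mul_nonpos_of_nonpos_of_nonneg hlam (h.1 _)

theorem Eig.eq_zero_of_root {lam : ℝ} {ψ : Node → ℝ} (h : Eig r e d lam ψ) (h0 : ψ (.u 0) = 0)
    (he : ∀ s, e s ≠ 0) (hd : ∀ j, j ≤ d j) : ψ = 0 := by
  funext n
  induction row_connected r he hd (.u 0) n with
  | single hn => exact eq_zero_of_pair_nonpos ψ h.1 (by rw [h.2, h0, mul_zero]) hn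
  | tail _ hn ih =>
    have ih : ψ _ = 0 := ih
    exact eq_zero_of_pair_nonpos ψ h.1 (by rw [h.2, ih, mul_zero]) hn

theorem pair_u (ψ : Node → ℝ) (k : ℕ) : pair ψ (row r e d (.u k)) =
    ψ (.u (k + 1)) + r k * ψ (.u 0) + ∑ s ∈ hang k, e s * ψ (.b s) := by
  simp [row, pair_single]

theorem pair_b (ψ : Node → ℝ) (s : Vtx) : pair ψ (row r e d (.b s)) =
    ∑ t ∈ s.ch, ψ (.b t) + ψ (.z (d s.lev)) := by
  simp [row, pair_single]

/-- Returning to `u 0` from `u k` too often excludes eigenvectors for small eigenvalues, as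
`ψ (u k) ≤ lam ^ k * ψ (u 0)` in any case. -/
theorem Eig.eq_zero_of_lt {lam : ℝ} {ψ : Node → ℝ} (h : Eig r e d lam ψ) (hlam : 0 < lam)
    (he : ∀ s, e s ≠ 0) (hd : ∀ j, j ≤ d j) {k : ℕ} (hk : lam ^ (k + 1) < r k) : ψ = 0 := by
  refine h.eq_zero_of_root ?_ he hd
  have hu : ∀ k, ψ (.u (k + 1)) + r k * ψ (.u 0) ≤ lam * ψ (.u k) := fun k => by
    rw [← h.2, pair_u]
    exact le_add_of_nonneg_right
      (Finset.sum_nonneg fun s _ => mul_nonneg (Nat.cast_nonneg _) (h.1 _))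
  have hgrow : ∀ k, ψ (.u k) ≤ lam ^ k * ψ (.u 0) := by
    intro k
    induction k with
    | zero => simp
    | succ k ih =>
      have h1 := hu k
      have h2 := mul_le_mul_of_nonneg_left ih hlam.le
      have h3 : 0 ≤ (r k : ℝ) * ψ (.u 0) := mul_nonneg (Nat.cast_nonneg _) (h.1 _)
      rw [pow_succ']
      linarith
  have h1 := hu k
  have h2 := mul_le_mul_of_nonneg_left (hgrow k) hlam.le
  have h3 := h.1 (.u (k + 1))
  have h4 := h.1 (.u 0)
  rw [← mul_assoc, ← pow_succ'] at h2
  by_contra hne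
  have h5 : 0 < ψ (.u 0) := lt_of_le_of_ne h4 (Ne.symm hne)
  have := mul_lt_mul_of_pos_right hk h5
  linarith

end Graph

/-! ### The minimal solution of the inhomogeneous flow equation -/

/-- The iterates, started at `0`, of the equation `κ s = ρ (lev s) + ∑ κ t` with the sum over
the children `t` of `s`. -/
noncomputable def kit (ρ : ℕ → ℝ) : ℕ → Vtx → ℝ
  | 0, _ => 0
  | i + 1, s => ρ s.lev + ∑ t ∈ s.ch, kit ρ i t

/-- The minimal nonnegative solution of `κ s = ρ (lev s) + ∑ κ t`, provided that there is one. -/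
noncomputable def kap (ρ : ℕ → ℝ) (s : Vtx) : ℝ := ⨆ i, kit ρ i s

section Kappa
variable {ρ : ℕ → ℝ} (hρ : ∀ j, 0 ≤ ρ j)
include hρ

theorem kit_mono_succ (i : ℕ) : ∀ s, kit ρ i s ≤ kit ρ (i + 1) s := by
  induction i with
  | zero =>
    intro s
    simp only [kit, Finset.sum_const_zero, add_zero]
    exact hρ _
  | succ i ih =>
    intro s
    rw [kit, kit]
    gcongr with t ht
    exact ih t

theorem kit_monotone (s : Vtx) : Monotone fun i => kit ρ i s :=
  monotone_nat_of_le_succ fun i => kit_mono_succ hρ i s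

omit hρ in
/-- The iterates stay below every nonnegative supersolution. -/
theorem kit_le {φ : Vtx → ℝ} (h0 : ∀ s, 0 ≤ φ s)
    (hφ : ∀ s, ρ s.lev + ∑ t ∈ s.ch, φ t ≤ φ s) (i : ℕ) : ∀ s, kit ρ i s ≤ φ s := by
  induction i with
  | zero => exact h0
  | succ i ih =>
    intro s
    refine le_trans ?_ (hφ s)
    rw [kit]
    gcongr with t ht
    exact ih t

omit hρ in
theorem kap_le {φ : Vtx → ℝ} (h0 : ∀ s, 0 ≤ φ s)
    (hφ : ∀ s, ρ s.lev + ∑ t ∈ s.ch, φ t ≤ φ s) (s : Vtx) : kap ρ s ≤ φ s :=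
  ciSup_le fun i => kit_le h0 hφ i s

section Bdd
variable {φ : Vtx → ℝ} (h0 : ∀ s, 0 ≤ φ s) (hφ : ∀ s, ρ s.lev + ∑ t ∈ s.ch, φ t ≤ φ s)
include h0 hφ

theorem tendsto_kit (s : Vtx) : Tendsto (fun i => kit ρ i s) atTop (𝓝 (kap ρ s)) :=
  tendsto_atTop_ciSup (kit_monotone hρ s) ⟨φ s, by rintro _ ⟨i, rfl⟩; exact kit_le h0 hφ i s⟩

theorem kap_nonneg (s : Vtx) : 0 ≤ kap ρ s :=
  (kit_monotone hρ s).ge_of_tendsto (tendsto_kit hρ h0 hφ s) 0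

theorem kap_eq (s : Vtx) : kap ρ s = ρ s.lev + ∑ t ∈ s.ch, kap ρ t := by
  refine tendsto_nhds_unique ((tendsto_kit hρ h0 hφ s).comp (tendsto_add_atTop_nat 1)) ?_
  exact tendsto_const_nhds.add (tendsto_finsetSum _ fun t _ => tendsto_kit hρ h0 hφ t)

end Bdd
end Kappa

/-! ### Eigenvectors as flows -/

/-- The part of the forest attached to the trunk below `u k`. -/
noncomputable def below (k : ℕ) : Finset Vtx := by
  classical exact (Finset.range k).biUnion hang

theorem mem_below {k : ℕ} {s : Vtx} : s ∈ below k ↔ 2 * s.lev < k := by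
  simp [below, mem_hang]

theorem sum_below (f : Vtx → ℝ) (k : ℕ) :
    ∑ s ∈ below k, f s = ∑ i ∈ Finset.range k, ∑ s ∈ hang i, f s := by
  classical
  rw [below, Finset.sum_biUnion]
  intro i _ j _ hij
  refine Finset.disjoint_left.2 fun s hi hj => hij ?_
  rw [← mem_hang.1 hi, ← mem_hang.1 hj]

theorem tendsto_below : Tendsto below atTop atTop := by
  refine tendsto_atTop_finset_of_monotone (fun i j hij s hs => ?_) fun s => ⟨2 * s.lev + 1, ?_⟩
  · rw [mem_below] at hs ⊢
    omega
  · rw [mem_below]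
    omega

/-- The eigenvector for the eigenvalue `lam` associated with a flow `m`, where `κ` is the minimal
solution which accounts for the edges into the return road. -/
noncomputable def eigOf (r : ℕ → ℕ) (c κ : Vtx → ℝ) (lam : ℝ) (m : Vtx → ℝ) : Node → ℝ
  | .u k => lam ^ k * (1 - ∑ i ∈ Finset.range k,
      (r i * lam⁻¹ ^ (i + 1) + ∑ s ∈ hang i, c s * (m s + κ s)))
  | .z k => lam⁻¹ ^ (k + 1)
  | .b s => lam ^ s.lev * (m s + κ s)

section EigFlow
variable {r : ℕ → ℕ} {e : Vtx → ℕ} {d : ℕ → ℕ} {lam : ℝ} (hlam : 0 < lam) {c κ : Vtx → ℝ} {L : ℝ}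

theorem continuous_eigOf : Continuous (eigOf r c κ lam) := by
  refine continuous_pi fun n => ?_
  rcases n with k | k | s
  · simp only [eigOf]; fun_prop
  · simp only [eigOf]; fun_prop
  · simp only [eigOf]; fun_prop

theorem eigOf_affine (m m' : Vtx → ℝ) {a b : ℝ} (hab : a + b = 1) :
    eigOf r c κ lam (a • m + b • m') = a • eigOf r c κ lam m + b • eigOf r c κ lam m' := by
  obtain rfl : b = 1 - a := by linarith
  funext n
  rcases n with k | k | s
  · simp only [eigOf, Pi.add_apply, Pi.smul_apply, smul_eq_mul]
    have : ∀ i, (r i * lam⁻¹ ^ (i + 1) +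
        ∑ s ∈ hang i, c s * (a * m s + (1 - a) * m' s + κ s)) =
        a * (r i * lam⁻¹ ^ (i + 1) + ∑ s ∈ hang i, c s * (m s + κ s)) +
        (1 - a) * (r i * lam⁻¹ ^ (i + 1) + ∑ s ∈ hang i, c s * (m' s + κ s)) := by
      intro i
      have : ∑ s ∈ hang i, c s * (a * m s + (1 - a) * m' s + κ s) =
          a * ∑ s ∈ hang i, c s * (m s + κ s) + (1 - a) * ∑ s ∈ hang i, c s * (m' s + κ s) := by
        rw [Finset.mul_sum, Finset.mul_sum, ← Finset.sum_add_distrib]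
        exact Finset.sum_congr rfl fun s _ => by ring
      rw [this]
      ring
    simp only [this, Finset.sum_add_distrib (f := fun i => a * _), ← Finset.mul_sum]
    ring
  · simp only [eigOf, Pi.add_apply, Pi.smul_apply, smul_eq_mul]
    ring
  · simp only [eigOf, Pi.add_apply, Pi.smul_apply, smul_eq_mul]
    ring

include hlam

theorem eigOf_injective : Function.Injective (eigOf r c κ lam) := by
  intro m m' h
  funext s
  have h1 := congrFun h (.b s)
  simp only [eigOf] at h1
  have := mul_left_cancel₀ (pow_pos hlam _).ne' h1
  linarith

/-- `eigOf` solves the eigenvalue equation. The factor `2` in `hang` turns the scaling `lam ^ lev s`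
of the values at `b s` into the weights `c s = e s * lam⁻¹ ^ (lev s + 1)`. -/
theorem eigOf_eq (m : Vtx → ℝ) (hc : ∀ s, c s = e s * lam⁻¹ ^ (s.lev + 1))
    (hκ : ∀ s, κ s = lam⁻¹ ^ (s.lev + d s.lev + 2) + ∑ t ∈ s.ch, κ t)
    (hm : ∀ s, m s = ∑ t ∈ s.ch, m t) (n : Node) :
    pair (eigOf r c κ lam m) (row r e d n) = lam * eigOf r c κ lam m n := by
  have hne := hlam.ne'
  rcases n with k | (_ | k) | s
  · rw [pair_u]
    have h1 : ∑ s ∈ hang k, e s * eigOf r c κ lam m (.b s) =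
        lam ^ (k + 1) * ∑ s ∈ hang k, c s * (m s + κ s) := by
      rw [Finset.mul_sum]
      refine Finset.sum_congr rfl fun s hs => ?_
      rw [mem_hang] at hs
      subst hs
      rw [hc, eigOf, inv_pow]
      field_simp
      ring
    rw [h1]
    simp only [eigOf, Finset.sum_range_succ, Finset.sum_range_zero, pow_zero, sub_zero, mul_one]
    rw [inv_pow]
    field_simp
    ring
  · simp [row, pair_single, eigOf, hne]
  · simp only [row, pair_single, eigOf, Nat.cast_one, one_mul]
    rw [pow_succ lam⁻¹ (k + 1)]
    field_simp
  · rw [pair_b]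
    have h1 : ∑ t ∈ s.ch, eigOf r c κ lam m (.b t) =
        lam ^ (s.lev + 1) * ∑ t ∈ s.ch, (m t + κ t) := by
      rw [Finset.mul_sum]
      refine Finset.sum_congr rfl fun t ht => ?_
      rw [eigOf, (mem_ch.1 ht).1]
    rw [h1, Finset.sum_add_distrib, ← hm]
    have h2 := hκ s
    have h3 : ∑ t ∈ s.ch, κ t = κ s - lam⁻¹ ^ (s.lev + d s.lev + 2) := by linarith
    rw [h3]
    simp only [eigOf]
    rw [show s.lev + d s.lev + 2 = (s.lev + 1) + (d s.lev + 1) by ring, pow_add lam⁻¹ (s.lev + 1)]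
    rw [inv_pow, inv_pow]
    field_simp
    ring

section Main
variable (hc : ∀ s, c s = e s * lam⁻¹ ^ (s.lev + 1))
  (hκ : ∀ s, κ s = lam⁻¹ ^ (s.lev + d s.lev + 2) + ∑ t ∈ s.ch, κ t)
  (hκ0 : ∀ s, 0 ≤ κ s)
  (hκmin : ∀ φ : Vtx → ℝ, (∀ s, 0 ≤ φ s) →
    (∀ s, φ s = lam⁻¹ ^ (s.lev + d s.lev + 2) + ∑ t ∈ s.ch, φ t) → ∀ s, κ s ≤ φ s)
  (hR : Summable fun k => (r k : ℝ) * lam⁻¹ ^ (k + 1)) (hQ : Summable fun s => c s * κ s)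
  (hL : L = 1 - ∑' k, (r k : ℝ) * lam⁻¹ ^ (k + 1) - ∑' s, c s * κ s)
include hc hκ hκ0 hR hQ hL

/-- The budget `L` of the flow is what makes the values along the trunk nonnegative. -/
theorem eigOf_mem {m : Vtx → ℝ} (hm : m ∈ Flows c L) : Eig r e d lam (eigOf r c κ lam m) := by
  have hc0 : ∀ s, 0 ≤ c s := fun s => by rw [hc]; positivity
  refine ⟨?_, eigOf_eq hlam m hc hκ hm.2.1⟩
  rintro (k | k | s)
  · refine mul_nonneg (by positivity) (sub_nonneg.2 ?_)
    rw [Finset.sum_add_distrib, ← sum_below]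
    simp only [mul_add, Finset.sum_add_distrib]
    have h1 := hm.2.2 (below k)
    have h2 : ∑ s ∈ below k, c s * κ s ≤ _ :=
      hQ.sum_le_tsum _ fun s _ => mul_nonneg (hc0 s) (hκ0 s)
    have h3 : ∑ i ∈ Finset.range k, (r i : ℝ) * lam⁻¹ ^ (i + 1) ≤ _ :=
      hR.sum_le_tsum _ fun s _ => by positivity
    linarith
  · simp only [eigOf]
    positivity
  · exact mul_nonneg (by positivity) (add_nonneg (hm.1 s) (hκ0 s))

include hκmin

omit hκ0 in
/-- Rescaled to `φ s = lam⁻¹ ^ lev s * ψ (b s)`, an eigenvector solves the inhomogeneous flow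
equation on the forest, so `φ - κ` is a flow; nonnegativity along the trunk bounds its weight. -/
theorem exists_flow {ψ : Node → ℝ} (h : Eig r e d lam ψ) (h1 : ψ (.u 0) = 1) :
    ∃ m ∈ Flows c L, eigOf r c κ lam m = ψ := by
  have hne := hlam.ne'
  have hc0 : ∀ s, 0 ≤ c s := fun s => by rw [hc]; positivity
  have hz : ∀ k, ψ (.z k) = lam⁻¹ ^ (k + 1) := by
    intro k
    induction k with
    | zero =>
      have h2 := h.2 (.z 0)
      simp only [row, pair_single, Nat.cast_one, one_mul, h1] at h2
      rw [zero_add, pow_one]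
      exact eq_inv_of_mul_eq_one_right h2.symm
    | succ k ih =>
      have h2 := h.2 (.z (k + 1))
      simp only [row, pair_single, Nat.cast_one, one_mul, ih] at h2
      rw [pow_succ, h2]
      field_simp
  let φ : Vtx → ℝ := fun s => lam⁻¹ ^ s.lev * ψ (.b s)
  have hbφ : ∀ s, ψ (.b s) = lam ^ s.lev * φ s := fun s => by
    simp only [φ, inv_pow]
    field_simp
  have hφ0 : ∀ s, 0 ≤ φ s := fun s => mul_nonneg (by positivity) (h.1 _)
  have hφ : ∀ s, φ s = lam⁻¹ ^ (s.lev + d s.lev + 2) + ∑ t ∈ s.ch, φ t := by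
    intro s
    have h2 := h.2 (.b s)
    rw [pair_b, hz] at h2
    have h3 : ∑ t ∈ s.ch, φ t = lam⁻¹ ^ (s.lev + 1) * ∑ t ∈ s.ch, ψ (.b t) := by
      rw [Finset.mul_sum]
      refine Finset.sum_congr rfl fun t ht => ?_
      simp only [φ]
      rw [(mem_ch.1 ht).1]
    rw [h3, show s.lev + d s.lev + 2 = (s.lev + 1) + (d s.lev + 1) by ring, pow_add, ← mul_add,
      add_comm (lam⁻¹ ^ (d s.lev + 1)), h2]
    simp only [φ]
    rw [pow_succ]
    field_simp
  have hu : ∀ k, lam⁻¹ ^ k * ψ (.u k) = 1 - ∑ i ∈ Finset.range k,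
      (r i * lam⁻¹ ^ (i + 1) + ∑ s ∈ hang i, c s * φ s) := by
    intro k
    induction k with
    | zero => simp [h1]
    | succ k ih =>
      rw [Finset.sum_range_succ, ← sub_sub, ← ih]
      have h2 := h.2 (.u k)
      rw [pair_u, h1] at h2
      have h3 : ∑ s ∈ hang k, c s * φ s = lam⁻¹ ^ (k + 1) * ∑ s ∈ hang k, e s * ψ (.b s) := by
        rw [Finset.mul_sum]
        refine Finset.sum_congr rfl fun s hs => ?_
        rw [mem_hang] at hs
        subst hs
        rw [hc]
        simp only [φ]
        ring
      have h4 : ψ (.u (k + 1)) = lam * ψ (.u k) - r k - ∑ s ∈ hang k, e s * ψ (.b s) := by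
        linarith
      rw [h3, h4, pow_succ]
      field_simp
      ring
  have hκφ := hκmin φ hφ0 hφ
  refine ⟨fun s => φ s - κ s, ⟨fun s => sub_nonneg.2 (hκφ s), fun s => ?_, fun F => ?_⟩, ?_⟩
  · show φ s - κ s = ∑ t ∈ s.ch, (φ t - κ t)
    rw [Finset.sum_sub_distrib]
    have h2 := hφ s
    have h3 := hκ s
    linarith
  · have ht : Tendsto (fun k => 1 - ∑ i ∈ Finset.range k, (r i : ℝ) * lam⁻¹ ^ (i + 1) -
        ∑ s ∈ below k, c s * κ s) atTop (𝓝 L) := by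
      rw [hL]
      exact (tendsto_const_nhds.sub hR.hasSum.tendsto_sum_nat).sub (hQ.hasSum.comp tendsto_below)
    -- the partial sums over `below k` are controlled by `0 ≤ ψ (u k)`
    refine ge_of_tendsto ht ?_
    filter_upwards [tendsto_below.eventually_ge_atTop F] with k hk
    have h2 : ∑ s ∈ F, c s * (φ s - κ s) ≤ ∑ s ∈ below k, c s * (φ s - κ s) :=
      Finset.sum_le_sum_of_subset_of_nonneg hk fun s _ _ =>
        mul_nonneg (hc0 s) (sub_nonneg.2 (hκφ s))
    have h3 : 0 ≤ lam⁻¹ ^ k * ψ (.u k) := mul_nonneg (by positivity) (h.1 _)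
    rw [hu, Finset.sum_add_distrib, ← sum_below] at h3
    simp only [mul_sub, Finset.sum_sub_distrib] at h2 ⊢
    linarith
  · funext n
    rcases n with k | k | s
    · simp only [eigOf, sub_add_cancel]
      rw [← hu k, inv_pow]
      field_simp
    · rw [hz, eigOf]
    · simp only [eigOf, sub_add_cancel]
      exact (hbφ s).symm

theorem eig_eq_image : {ψ | Eig r e d lam ψ ∧ ψ (.u 0) = 1} = eigOf r c κ lam '' Flows c L := by
  ext ψ
  constructor
  · rintro ⟨h, h1⟩
    exact exists_flow hlam hc hκ hκmin hR hQ hL h h1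
  · rintro ⟨m, hm, rfl⟩
    exact ⟨eigOf_mem hlam hc hκ hκ0 hR hQ hL hm, by simp [eigOf]⟩

end Main
end EigFlow

/-! ### The choice of the multiplicities -/

/-- The number of edges from `u k` back to `u 0`. -/
noncomputable def rr (h : ℝ) (k : ℕ) : ℕ := ⌊h ^ (k + 1) / (2 * (k + 1) * (k + 2))⌋₊

/-- The numbers `rr h k` are small enough to leave room for eigenvectors with `lam ≥ h`. -/
theorem rr_le {h lam : ℝ} (hh : 1 < h) (hlam : h ≤ lam) (k : ℕ) :
    (rr h k : ℝ) * lam⁻¹ ^ (k + 1) ≤ 1 / (2 * (k + 1) * (k + 2)) := by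
  have h0 : 0 < h := by linarith
  have h1 : 0 < lam := by linarith
  have h2 : (rr h k : ℝ) ≤ h ^ (k + 1) / (2 * (k + 1) * (k + 2)) := Nat.floor_le (by positivity)
  have h3 : h ^ (k + 1) ≤ lam ^ (k + 1) := by gcongr
  have h4 : (rr h k : ℝ) ≤ lam ^ (k + 1) / (2 * (k + 1) * (k + 2)) := h2.trans (by gcongr)
  calc _ ≤ lam ^ (k + 1) / (2 * (k + 1) * (k + 2)) * lam⁻¹ ^ (k + 1) := by gcongr
    _ = _ := by rw [inv_pow]; field_simp

theorem sum_rr_le {h lam : ℝ} (hh : 1 < h) (hlam : h ≤ lam) (k : ℕ) :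
    ∑ i ∈ Finset.range k, (rr h i : ℝ) * lam⁻¹ ^ (i + 1) ≤ 1 / 2 := by
  have key : ∑ i ∈ Finset.range k, (rr h i : ℝ) * lam⁻¹ ^ (i + 1) ≤ 1 / 2 - 1 / (2 * (k + 1)) := by
    induction k with
    | zero => simp
    | succ k ih =>
      rw [Finset.sum_range_succ]
      refine (add_le_add ih (rr_le hh hlam k)).trans (le_of_eq ?_)
      push_cast
      field_simp
      ring
  have : (0 : ℝ) ≤ 1 / (2 * (k + 1)) := by positivity
  linarith

theorem summable_rr {h lam : ℝ} (hh : 1 < h) (hlam : h ≤ lam) :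
    Summable fun k => (rr h k : ℝ) * lam⁻¹ ^ (k + 1) := by
  have h1 : 0 < lam := by linarith
  exact summable_of_sum_range_le (fun k => by positivity) (sum_rr_le hh hlam)

theorem tsum_rr_le {h lam : ℝ} (hh : 1 < h) (hlam : h ≤ lam) :
    ∑' k, (rr h k : ℝ) * lam⁻¹ ^ (k + 1) ≤ 1 / 2 := by
  have h1 : 0 < lam := by linarith
  exact Real.tsum_le_of_sum_range_le (fun k => by positivity) (sum_rr_le hh hlam)

/-- The numbers `rr h k` are large enough to exclude eigenvectors with `lam < h`, since they have
exponential growth rate `h`. -/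
theorem exists_lt_rr {h lam : ℝ} (hh : 1 < h) (h0 : 0 < lam) (hlam : lam < h) :
    ∃ k, lam ^ (k + 1) < rr h k := by
  have hμ : 0 < max lam 1 := by positivity
  have hμh : 1 < h / max lam 1 := by
    rw [one_lt_div hμ]
    exact max_lt hlam hh
  have ht := tendsto_pow_const_div_const_pow_of_one_lt 2 hμh
  have ht' := (tendsto_add_atTop_iff_nat 1).2 ht
  obtain ⟨k, hk⟩ := (ht'.eventually (gt_mem_nhds (show (0 : ℝ) < 1 / 8 by norm_num))).exists
  refine ⟨k, ?_⟩
  rw [div_lt_iff₀ (by positivity), div_pow] at hk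
  push_cast at hk
  have h1 : lam ^ (k + 1) ≤ max lam 1 ^ (k + 1) := by gcongr; exact le_max_left _ _
  have h2 : 1 ≤ max lam 1 ^ (k + 1) := one_le_pow₀ (le_max_right _ _)
  have h3 : 8 * ((k : ℝ) + 1) ^ 2 * max lam 1 ^ (k + 1) < h ^ (k + 1) := by
    have h4 : ((k : ℝ) + 1) ^ 2 * 8 < h ^ (k + 1) / max lam 1 ^ (k + 1) := by linarith
    rw [lt_div_iff₀ (by positivity)] at h4
    linarith
  have h5 : lam ^ (k + 1) + 1 ≤ h ^ (k + 1) / (2 * (k + 1) * (k + 2)) := by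
    rw [le_div_iff₀ (by positivity)]
    refine le_trans ?_ h3.le
    have h6 : (lam ^ (k + 1) + 1) ≤ 2 * max lam 1 ^ (k + 1) := by linarith
    have hk0 : (0 : ℝ) ≤ k := Nat.cast_nonneg k
    calc (lam ^ (k + 1) + 1) * (2 * (k + 1) * (k + 2))
        ≤ 2 * max lam 1 ^ (k + 1) * (2 * (k + 1) * (2 * (k + 1))) := by gcongr; linarith
      _ = _ := by ring
  have h7 := Nat.lt_floor_add_one (h ^ (k + 1) / (2 * ((k : ℝ) + 1) * (k + 2)))
  rw [rr]
  linarith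

/-- An enumeration of the nonnegative rational numbers. -/
noncomputable def qq (n : ℕ) : ℝ := |(((Denumerable.eqv ℚ).symm n : ℚ) : ℝ)|

theorem qq_nonneg (n : ℕ) : 0 ≤ qq n := abs_nonneg _

theorem exists_qq_between {a b : ℝ} (h0 : 0 ≤ a) (hab : a < b) : ∃ n, a < qq n ∧ qq n < b := by
  obtain ⟨q, h1, h2⟩ := exists_rat_btwn hab
  refine ⟨Denumerable.eqv ℚ q, ?_⟩
  have : qq (Denumerable.eqv ℚ q) = q := by
    rw [qq, Equiv.symm_apply_apply, abs_of_nonneg (h0.trans h1.le)]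
  rw [this]
  exact ⟨h1, h2⟩

/-- The number of edges from the trunk to `b s`. -/
noncomputable def ee (s : Vtx) : ℕ := ⌊qq s.idx ^ s.lev⌋₊ + 1

/-- The weight, for the eigenvalue `lam`, of the vertices of level `j` in the `n`-th tree. -/
noncomputable def ww (lam : ℝ) (n j : ℕ) : ℝ := (⌊qq n ^ j⌋₊ + 1) * lam⁻¹ ^ (j + 1)

theorem ww_pos {lam : ℝ} (h0 : 0 < lam) (n j : ℕ) : 0 < ww lam n j := by
  unfold ww
  positivity

theorem vwt_ww (lam : ℝ) (s : Vtx) : vwt (ww lam) s = ee s * lam⁻¹ ^ (s.lev + 1) := by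
  simp [vwt, ww, ee]

/-- By comparison with a geometric series. -/
theorem active_ww {lam : ℝ} (h1 : 1 < lam) : active (ww lam) = {n | qq n < lam} := by
  have h0 : 0 < lam := by linarith
  ext n
  show Summable (lw (ww lam) n) ↔ qq n < lam
  constructor
  · intro hs
    by_contra hcon
    push Not at hcon
    have ht := hs.tendsto_atTop_zero
    have h2 : lam⁻¹ ≤ 0 := by
      refine ge_of_tendsto ht ?_
      filter_upwards [eventually_gt_atTop n] with j hj
      rw [lw, if_pos hj, ww]
      have h3 : lam ^ j ≤ (⌊qq n ^ j⌋₊ + 1 : ℝ) :=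
        le_trans (by gcongr) (Nat.lt_floor_add_one (qq n ^ j)).le
      calc lam⁻¹ = lam ^ j * lam⁻¹ ^ (j + 1) := by rw [pow_succ, inv_pow]; field_simp
        _ ≤ _ := by gcongr
    have h3 : 0 < lam⁻¹ := by positivity
    linarith
  · intro hq
    have hq0 := qq_nonneg n
    have hsum : Summable fun j : ℕ => lam⁻¹ * ((qq n * lam⁻¹) ^ j + lam⁻¹ ^ j) := by
      refine ((summable_geometric_of_lt_one (by positivity) ?_).add
        (summable_geometric_of_lt_one (by positivity) (inv_lt_one_of_one_lt₀ h1))).mul_left _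
      rw [← div_eq_mul_inv, div_lt_one h0]
      exact hq
    refine hsum.of_nonneg_of_le (lw_nonneg (ww_pos h0) n) fun j => ?_
    have h3 : ww lam n j ≤ lam⁻¹ * ((qq n * lam⁻¹) ^ j + lam⁻¹ ^ j) := by
      have h4 : (⌊qq n ^ j⌋₊ : ℝ) ≤ qq n ^ j := Nat.floor_le (by positivity)
      calc ww lam n j ≤ (qq n ^ j + 1) * lam⁻¹ ^ (j + 1) := by unfold ww; gcongr
        _ = _ := by rw [mul_pow]; ring
    unfold lw
    split_ifs
    · exact h3
    · positivity

theorem active_ww_injOn : Set.InjOn (fun lam => active (ww lam)) (Set.Ioi 1) := by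
  have key : ∀ a b : ℝ, 1 < a → a < b → active (ww a) ≠ active (ww b) := by
    intro a b ha hab h
    obtain ⟨n, h1, h2⟩ := exists_qq_between (by linarith) hab
    rw [active_ww ha, active_ww (ha.trans hab)] at h
    have : n ∈ {n | qq n < a} := h ▸ h2
    exact lt_asymm h1 this
  intro a ha b hb h
  rcases lt_trichotomy a b with hab | hab | hab
  · exact absurd h (key a b ha hab)
  · exact hab
  · exact absurd h.symm (key b a hb hab)

/-- The reciprocal of an upper bound for `κ` on the vertices of level `j`. The factors are chosen
so that the bounds decrease by at least `4` from one level to the next, which compensates for the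
at most two children of a vertex, and that their sum weighted with `ee` is at most `1 / 4`. -/
noncomputable def DD (j : ℕ) : ℝ :=
  ∏ i ∈ Finset.range (j + 1), (8 * 4 ^ i * (∑ s ∈ hang (2 * i), (ee s : ℝ) + 1))

theorem DD_factor (i : ℕ) : (4 : ℝ) ≤ 8 * 4 ^ i * (∑ s ∈ hang (2 * i), (ee s : ℝ) + 1) := by
  have h1 : (1 : ℝ) ≤ 4 ^ i := one_le_pow₀ (by norm_num)
  have h2 : (0 : ℝ) ≤ ∑ s ∈ hang (2 * i), (ee s : ℝ) := Finset.sum_nonneg fun _ _ => by positivity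
  nlinarith

theorem one_le_DD (j : ℕ) : 1 ≤ DD j := by
  unfold DD
  refine Finset.prod_induction _ (fun x : ℝ => 1 ≤ x) (fun a b => one_le_mul_of_one_le_of_one_le)
    le_rfl fun i _ => le_trans (by norm_num) (DD_factor i)

theorem DD_succ (j : ℕ) : 4 * DD j ≤ DD (j + 1) := by
  have h1 := DD_factor (j + 1)
  have h2 := one_le_DD j
  have h3 : DD (j + 1) = DD j * _ := Finset.prod_range_succ _ _
  rw [h3, mul_comm]
  gcongr

theorem le_DD (j : ℕ) : 8 * 4 ^ j * ∑ s ∈ hang (2 * j), (ee s : ℝ) ≤ DD j := by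
  have h0 : (0 : ℝ) ≤ ∑ s ∈ hang (2 * j), (ee s : ℝ) := Finset.sum_nonneg fun _ _ => by positivity
  have h1 : 8 * 4 ^ j * ∑ s ∈ hang (2 * j), (ee s : ℝ) ≤
      8 * 4 ^ j * (∑ s ∈ hang (2 * j), (ee s : ℝ) + 1) := by gcongr; linarith
  refine h1.trans ?_
  rw [DD, Finset.prod_range_succ]
  refine le_mul_of_one_le_left (by positivity) ?_
  exact Finset.prod_induction _ (fun x : ℝ => 1 ≤ x) (fun a b => one_le_mul_of_one_le_of_one_le)
    le_rfl fun i _ => le_trans (by norm_num) (DD_factor i)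

/-- The return roads can be chosen so long that they contribute little to the eigenvectors. -/
theorem exists_dd {h : ℝ} (hh : 1 < h) : ∃ d : ℕ → ℕ, ∀ j, j ≤ d j ∧ 2 * DD j ≤ h ^ d j := by
  have : ∀ j, ∃ n, j ≤ n ∧ 2 * DD j ≤ h ^ n := by
    intro j
    obtain ⟨n, hn⟩ := pow_unbounded_of_one_lt (2 * DD j) hh
    exact ⟨max j n, le_max_left _ _, hn.le.trans (pow_le_pow_right₀ hh.le (le_max_right _ _))⟩
  exact ⟨fun j => (this j).choose, fun j => (this j).choose_spec⟩

/-- `(DD (lev s))⁻¹` is a supersolution of the equation defining `κ`. -/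
theorem DD_super {h lam : ℝ} (hh : 1 < h) (hlam : h ≤ lam) {d : ℕ → ℕ}
    (hd : ∀ j, 2 * DD j ≤ h ^ d j) (s : Vtx) :
    lam⁻¹ ^ (s.lev + d s.lev + 2) + ∑ t ∈ s.ch, (DD t.lev)⁻¹ ≤ (DD s.lev)⁻¹ := by
  have h0 : 0 < lam := by linarith
  have hD := one_le_DD s.lev
  have hD' : 0 < DD s.lev := by linarith
  have h1 : lam⁻¹ ^ (s.lev + d s.lev + 2) ≤ (2 * DD s.lev)⁻¹ := by
    rw [inv_pow]
    gcongr
    calc 2 * DD s.lev ≤ h ^ d s.lev := hd _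
      _ ≤ lam ^ d s.lev := by gcongr
      _ ≤ _ := pow_le_pow_right₀ (by linarith) (by omega)
  have h2 : ∑ t ∈ s.ch, (DD t.lev)⁻¹ ≤ 2 * (4 * DD s.lev)⁻¹ := by
    calc ∑ t ∈ s.ch, (DD t.lev)⁻¹ ≤ ∑ t ∈ s.ch, (4 * DD s.lev)⁻¹ := by
          refine Finset.sum_le_sum fun t ht => ?_
          rw [(mem_ch.1 ht).1]
          gcongr
          exact DD_succ _
      _ = s.ch.card * (4 * DD s.lev)⁻¹ := by rw [Finset.sum_const, nsmul_eq_mul]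
      _ ≤ _ := by
          gcongr
          exact_mod_cast card_ch s
  calc _ ≤ (2 * DD s.lev)⁻¹ + 2 * (4 * DD s.lev)⁻¹ := add_le_add h1 h2
    _ = _ := by field_simp; norm_num

theorem sum_ee_DD (k : ℕ) : ∑ s ∈ below k, (ee s : ℝ) * (DD s.lev)⁻¹ ≤ 1 / 4 := by
  rw [sum_below]
  have h1 : ∀ i, ∑ s ∈ hang i, (ee s : ℝ) * (DD s.lev)⁻¹ ≤ 1 / 8 * (1 / 2) ^ i := by
    intro i
    rcases Nat.even_or_odd' i with ⟨j, rfl | rfl⟩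
    · have hD := one_le_DD j
      have h2 : ∑ s ∈ hang (2 * j), (ee s : ℝ) * (DD s.lev)⁻¹ =
          (∑ s ∈ hang (2 * j), (ee s : ℝ)) * (DD j)⁻¹ := by
        rw [Finset.sum_mul]
        refine Finset.sum_congr rfl fun s hs => ?_
        have := mem_hang.1 hs
        rw [show s.lev = j by omega]
      rw [h2, ← div_eq_mul_inv, div_le_iff₀ (by linarith), pow_mul]
      have h3 := le_DD j
      have h4 : (1 / 8 : ℝ) * ((1 / 2) ^ 2) ^ j * (8 * 4 ^ j) = 1 := by
        rw [show ((1 / 2 : ℝ)) ^ 2 = 1 / 4 by norm_num, one_div_pow]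
        field_simp
      calc _ = (1 / 8 : ℝ) * ((1 / 2) ^ 2) ^ j *
            (8 * 4 ^ j * ∑ s ∈ hang (2 * j), (ee s : ℝ)) := by rw [← mul_assoc, h4, one_mul]
        _ ≤ _ := by gcongr
    · refine le_trans (le_of_eq (Finset.sum_eq_zero fun s hs => ?_)) (by positivity)
      have := mem_hang.1 hs
      omega
  calc _ ≤ ∑ i ∈ Finset.range k, 1 / 8 * (1 / 2 : ℝ) ^ i := Finset.sum_le_sum fun i _ => h1 i
    _ = 1 / 8 * ∑ i ∈ Finset.range k, (1 / 2 : ℝ) ^ i := by rw [Finset.mul_sum]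
    _ ≤ 1 / 8 * 2 := by gcongr; exact sum_geometric_two_le k
    _ = 1 / 4 := by norm_num

/-- For `lam ≥ h` the normalized eigenvectors are parametrized by a set of flows. -/
theorem exists_eig_eq_image {h : ℝ} (hh : 1 < h) {d : ℕ → ℕ} (hd : ∀ j, 2 * DD j ≤ h ^ d j)
    {lam : ℝ} (hlam : h ≤ lam) : ∃ (κ : Vtx → ℝ) (L : ℝ), 0 < L ∧
      {ψ | Eig (rr h) ee d lam ψ ∧ ψ (.u 0) = 1} =
        eigOf (rr h) (vwt (ww lam)) κ lam '' Flows (vwt (ww lam)) L := by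
  have h0 : 0 < lam := by linarith
  set ρ : ℕ → ℝ := fun j => lam⁻¹ ^ (j + d j + 2) with hρ
  have hρ0 : ∀ j, 0 ≤ ρ j := fun j => by simp only [hρ]; positivity
  have hδ0 : ∀ s : Vtx, 0 ≤ (DD s.lev)⁻¹ := fun s => by
    have := one_le_DD s.lev
    positivity
  have hδ := DD_super hh hlam hd
  have hκ0 := kap_nonneg hρ0 hδ0 hδ
  have hc0 : ∀ s, 0 ≤ vwt (ww lam) s := fun s => (ww_pos h0 _ _).le
  have hle : ∀ s, vwt (ww lam) s * kap ρ s ≤ ee s * (DD s.lev)⁻¹ := by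
    intro s
    refine mul_le_mul ?_ (kap_le hδ0 hδ s) (hκ0 s) (Nat.cast_nonneg _)
    rw [vwt_ww]
    refine mul_le_of_le_one_right (Nat.cast_nonneg _) (pow_le_one₀ (by positivity) ?_)
    exact inv_le_one_of_one_le₀ (by linarith)
  have hsum : ∀ F : Finset Vtx, ∑ s ∈ F, vwt (ww lam) s * kap ρ s ≤ 1 / 4 := by
    intro F
    obtain ⟨k, hk⟩ := (tendsto_below.eventually_ge_atTop F).exists
    calc _ ≤ ∑ s ∈ below k, vwt (ww lam) s * kap ρ s :=
          Finset.sum_le_sum_of_subset_of_nonneg hk fun s _ _ => mul_nonneg (hc0 s) (hκ0 s)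
      _ ≤ ∑ s ∈ below k, (ee s : ℝ) * (DD s.lev)⁻¹ := Finset.sum_le_sum fun s _ => hle s
      _ ≤ 1 / 4 := sum_ee_DD k
  have hQ : Summable fun s => vwt (ww lam) s * kap ρ s :=
    summable_of_sum_le (fun s => mul_nonneg (hc0 s) (hκ0 s)) hsum
  refine ⟨kap ρ, _, ?_, eig_eq_image h0 (vwt_ww lam) (kap_eq hρ0 hδ0 hδ) hκ0
    (fun φ hφ0 hφ => kap_le hφ0 fun s => (hφ s).ge) (summable_rr hh hlam) hQ rfl⟩
  have h1 := tsum_rr_le hh hlam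
  have h2 := hQ.tsum_le_of_sum_le hsum
  linarith

/-! ### From the graph to a matrix over `ℕ` -/

/-- A path of positive length in the graph of a matrix yields a nonzero entry of a power. -/
theorem matPow_ne_zero_of_transGen {M : V → V → ℝ≥0∞} {v w : V}
    (h : Relation.TransGen (fun a b => M a b ≠ 0) v w) : ∃ n, 1 ≤ n ∧ matPow M n v w ≠ 0 := by
  have step : ∀ {v u : V} {n : ℕ}, M v u ≠ 0 → matPow M n u w ≠ 0 → matPow M (n + 1) v w ≠ 0 := by
    intro v u n h1 h2 h3
    rw [matPow, ENNReal.tsum_eq_zero] at h3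
    exact mul_ne_zero h1 h2 (h3 u)
  induction h using Relation.TransGen.head_induction_on with
  | single h => exact ⟨1, le_rfl, step h (by simp [matPow])⟩
  | head h _ ih =>
    obtain ⟨n, -, hn⟩ := ih
    exact ⟨n + 1, by omega, step h hn⟩

instance : Countable Node :=
  Function.Injective.countable (β := ℕ ⊕ ℕ ⊕ Vtx)
    (f := fun n => match n with
      | .u k => Sum.inl k
      | .z k => Sum.inr (Sum.inl k)
      | .b s => Sum.inr (Sum.inr s)) (by
      rintro (k | k | s) (k' | k' | s') h <;> simp at h <;> rw [h])

instance : Infinite Node := Infinite.of_injective Node.u fun _ _ h => Node.u.inj h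

/-- The vertices can be numbered so that `u 0` has number `0`, the index of the normalization. -/
theorem exists_labelling : ∃ σ : Node ≃ ℕ, σ (.u 0) = 0 := by
  obtain ⟨_⟩ := nonempty_denumerable Node
  exact ⟨(Denumerable.eqv Node).trans (Equiv.swap (Denumerable.eqv Node (.u 0)) 0), by simp⟩

section Affine
variable {E F : Type} [AddCommGroup E] [Module ℝ E] [AddCommGroup F] [Module ℝ F]

theorem extremePoints_image_of_affineOn {S : Set E} (hS : Convex ℝ S) {f : E → F}
    (hinj : Set.InjOn f S)
    (hf : ∀ x ∈ S, ∀ y ∈ S, ∀ a b : ℝ, 0 ≤ a → 0 ≤ b → a + b = 1 →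
      f (a • x + b • y) = a • f x + b • f y) :
    Set.extremePoints ℝ (f '' S) = f '' Set.extremePoints ℝ S := by
  ext y
  constructor
  · intro hy
    rw [mem_extremePoints_iff_left] at hy
    obtain ⟨⟨x, hx, rfl⟩, hy⟩ := hy
    refine ⟨x, ?_, rfl⟩
    rw [mem_extremePoints_iff_left]
    refine ⟨hx, ?_⟩
    rintro x₁ h₁ x₂ h₂ ⟨a, b, ha, hb, hab, rfl⟩
    exact hinj h₁ hx (hy _ ⟨x₁, h₁, rfl⟩ _ ⟨x₂, h₂, rfl⟩
      ⟨a, b, ha, hb, hab, (hf _ h₁ _ h₂ a b ha.le hb.le hab).symm⟩)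
  · rintro ⟨x, hx, rfl⟩
    rw [mem_extremePoints_iff_left] at hx ⊢
    refine ⟨⟨x, hx.1, rfl⟩, ?_⟩
    rintro _ ⟨x₁, h₁, rfl⟩ _ ⟨x₂, h₂, rfl⟩ ⟨a, b, ha, hb, hab, h⟩
    rw [← hf _ h₁ _ h₂ a b ha.le hb.le hab] at h
    have h3 := hinj (hS h₁ h₂ ha.le hb.le hab) hx.1 h
    rw [hx.2 x₁ h₁ x₂ h₂ ⟨a, b, ha, hb, hab, h3⟩]

end Affine

/-- A set of vectors which is affinely parametrized by the flows with weights `ww lam`. -/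
def FlowLike (lam : ℝ) (S : Set (ℕ → ℝ)) : Prop :=
  ∃ (Φ : (Vtx → ℝ) → ℕ → ℝ) (L : ℝ), 0 < L ∧ Continuous Φ ∧ Function.Injective Φ ∧
    (∀ m m' : Vtx → ℝ, ∀ a b : ℝ, a + b = 1 → Φ (a • m + b • m') = a • Φ m + b • Φ m') ∧
    S = Φ '' Flows (vwt (ww lam)) L

section FlowLike
variable {lam : ℝ} {S : Set (ℕ → ℝ)}

theorem FlowLike.nonempty (h : FlowLike lam S) : S.Nonempty := by
  obtain ⟨Φ, L, hL, -, -, -, rfl⟩ := h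
  exact ⟨_, 0, ⟨fun _ => le_rfl, fun s => by simp, fun F => by simpa using hL.le⟩, rfl⟩

theorem FlowLike.isCompact (h : FlowLike lam S) (h0 : 0 < lam) : IsCompact S := by
  obtain ⟨Φ, L, hL, hc, -, -, rfl⟩ := h
  exact (isCompact_flows (ww_pos h0)).image hc

theorem FlowLike.convex (h : FlowLike lam S) : Convex ℝ S := by
  obtain ⟨Φ, L, hL, -, -, ha, rfl⟩ := h
  rintro _ ⟨m, hm, rfl⟩ _ ⟨m', hm', rfl⟩ a b h1 h2 hab
  exact ⟨_, convex_flows _ hm hm' h1 h2 hab, ha _ _ _ _ hab⟩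

/-- The extreme boundary is a copy of the space of ends attached to `lam`. -/
theorem FlowLike.exists_param (h : FlowLike lam S) (h0 : 0 < lam) :
    ∃ G : EndSp (active (ww lam)) → ℕ → ℝ, Continuous G ∧ Function.Injective G ∧
      Set.range G = Set.extremePoints ℝ S := by
  obtain ⟨Φ, L, hL, hc, hi, ha, rfl⟩ := h
  refine ⟨fun x => Φ (pointFlow (ww lam) L x.1),
    hc.comp ((continuous_pointFlow _ _).comp continuous_subtype_val), fun x y hxy => ?_, ?_⟩
  · exact Subtype.ext (pointFlow_injOn (ww_pos h0) hL x.2 y.2 (hi hxy))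
  · rw [extremePoints_image_of_affineOn (convex_flows _) hi.injOn
      (fun x _ y _ a b _ _ hab => ha x y a b hab), range_pointFlow (ww_pos h0) hL,
      Set.image_image, Set.image_eq_range]

instance (A : Set ℕ) : CompactSpace (EndSp A) :=
  isCompact_iff_compactSpace.1 (isClosed_endSp A).isCompact

theorem FlowLike.isClosed_extremePoints (h : FlowLike lam S) (h0 : 0 < lam) :
    IsClosed (Set.extremePoints ℝ S) := by
  obtain ⟨G, hG, -, h1⟩ := h.exists_param h0
  rw [← h1]
  exact (isCompact_range hG).isClosed

/-- An affine homeomorphism maps extreme points to extreme points, hence gives a homeomorphism of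
the spaces of ends, which determine `lam`. -/
theorem FlowLike.eq_of_affine {lam' : ℝ} {S' : Set (ℕ → ℝ)} (h : FlowLike lam S)
    (h' : FlowLike lam' S') (h1 : 1 < lam) (h1' : 1 < lam') {f : (ℕ → ℝ) → ℕ → ℝ}
    (hf : Set.BijOn f S S') (hcont : ContinuousOn f S)
    (haff : ∀ x ∈ S, ∀ y ∈ S, ∀ t : ℝ, 0 ≤ t → t ≤ 1 →
      f (t • x + (1 - t) • y) = t • f x + (1 - t) • f y) : lam = lam' := by
  obtain ⟨G, hG, hGi, hGr⟩ := h.exists_param (by linarith)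
  obtain ⟨G', hG', hGi', hGr'⟩ := h'.exists_param (by linarith)
  have hGS : ∀ x, G x ∈ S := fun x => by
    have : G x ∈ Set.extremePoints ℝ S := hGr ▸ Set.mem_range_self x
    exact this.1
  have hc : Continuous fun x => f (G x) := hcont.comp_continuous hG hGS
  have hi : Function.Injective fun x => f (G x) := fun x y hxy =>
    hGi (hf.injOn (hGS x) (hGS y) hxy)
  have hr : Set.range (fun x => f (G x)) = Set.range G' := by
    rw [hGr', ← hf.image_eq, extremePoints_image_of_affineOn h.convex hf.injOn, ← hGr,
      ← Set.range_comp]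
    · rfl
    · intro x hx y hy a b ha hb hab
      obtain rfl : b = 1 - a := by linarith
      exact haff x hx y hy a ha (by linarith)
  have e : EndSp (active (ww lam)) ≃ₜ EndSp (active (ww lam')) :=
    ((hc.isClosedEmbedding hi).isEmbedding.toHomeomorph.trans (Homeomorph.setCongr hr)).trans
      (hG'.isClosedEmbedding hGi').isEmbedding.toHomeomorph.symm
  exact active_ww_injOn h1 h1' (endSp_homeo e)

end FlowLike

theorem tsum_labelling (σ : Node ≃ ℕ) (f : Node →₀ ℕ) (ψ : ℕ → ℝ) :
    ∑' j, (f (σ.symm j) : ℝ) * ψ j = pair (fun n => ψ (σ n)) f := by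
  rw [pair_apply, ← σ.tsum_eq]
  simp

/-- for every `h > 1` there is an irreducible row-finite matrix over
`ℕ ∪ {0}` with no nonzero nonnegative `λ`-eigenvectors for `λ < h`, while for `λ ≥ h` the
normalized nonnegative `λ`-eigenvectors form a nonempty compact convex set with closed
extreme boundary, and these sets are affinely homeomorphic only for equal `λ`. -/
theorem statement18 (h : ℝ) (hh : 1 < h) :
    ∃ (Amat : ℕ → ℕ → ℕ) (S : ℝ → Set (ℕ → ℝ)),
      (∀ lam : ℝ, S lam =
        {ψ : ℕ → ℝ | (∀ i, 0 ≤ ψ i) ∧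
          (∀ i, (∑' j : ℕ, (Amat i j : ℝ) * ψ j) = lam * ψ i) ∧ ψ 0 = 1}) ∧
      (∀ i : ℕ, {j : ℕ | Amat i j ≠ 0}.Finite) ∧
      (∀ i j : ℕ, ∃ n : ℕ, 1 ≤ n ∧
        matPow (fun i j : ℕ => (Amat i j : ℝ≥0∞)) n i j ≠ 0) ∧
      (∀ lam : ℝ, lam < h → ∀ ψ : ℕ → ℝ, (∀ i, 0 ≤ ψ i) →
        (∀ i, (∑' j : ℕ, (Amat i j : ℝ) * ψ j) = lam * ψ i) → ψ = 0) ∧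
      (∀ lam : ℝ, h ≤ lam →
        (S lam).Nonempty ∧ IsCompact (S lam) ∧ Convex ℝ (S lam) ∧
        IsClosed (Set.extremePoints ℝ (S lam))) ∧
      (∀ lam lam' : ℝ, h ≤ lam → h ≤ lam' →
        ((∃ f g : (ℕ → ℝ) → (ℕ → ℝ),
            Set.BijOn f (S lam) (S lam') ∧ ContinuousOn f (S lam) ∧
            ContinuousOn g (S lam') ∧ Set.InvOn g f (S lam) (S lam') ∧
            ∀ x ∈ S lam, ∀ y ∈ S lam, ∀ t : ℝ, 0 ≤ t → t ≤ 1 →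
              f (t • x + (1 - t) • y) = t • f x + (1 - t) • f y) ↔ lam = lam')) := by
  obtain ⟨σ, hσ⟩ := exists_labelling
  obtain ⟨d, hd⟩ := exists_dd hh
  have he : ∀ s, ee s ≠ 0 := fun s => Nat.succ_ne_zero _
  set M : ℕ → ℕ → ℕ := fun i j => row (rr h) ee d (σ.symm i) (σ.symm j) with hM
  -- eigenvectors over `ℕ` correspond to eigenvectors over the vertices of the graph
  have hEig : ∀ (lam : ℝ) (ψ : ℕ → ℝ), ((∀ i, 0 ≤ ψ i) ∧
      ∀ i, (∑' j : ℕ, (M i j : ℝ) * ψ j) = lam * ψ i) ↔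
        Eig (rr h) ee d lam fun n => ψ (σ n) := by
    intro lam ψ
    simp only [hM, tsum_labelling]
    refine and_congr ?_ ?_
    · exact σ.forall_congr_left.trans (by simp) |>.symm
    · exact (σ.forall_congr_left.trans (by simp)).symm
  set S : ℝ → Set (ℕ → ℝ) := fun lam => {ψ : ℕ → ℝ | (∀ i, 0 ≤ ψ i) ∧
    (∀ i, (∑' j : ℕ, (M i j : ℝ) * ψ j) = lam * ψ i) ∧ ψ 0 = 1} with hS
  have hflow : ∀ lam, h ≤ lam → FlowLike lam (S lam) := by
    intro lam hlam
    obtain ⟨κ, L, hL, heq⟩ := exists_eig_eq_image hh (fun j => (hd j).2) hlam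
    refine ⟨fun m i => eigOf (rr h) (vwt (ww lam)) κ lam m (σ.symm i), L, hL,
      continuous_pi fun i => (continuous_apply _).comp continuous_eigOf, fun m m' hm => ?_,
      fun m m' a b hab => ?_, ?_⟩
    · refine eigOf_injective (r := rr h) (c := vwt (ww lam)) (κ := κ) (lam := lam) (by linarith)
         (funext fun n => ?_)
      simpa using congrFun hm (σ n)
    · funext i
      exact congrFun (eigOf_affine m m' hab) (σ.symm i)
    · ext ψ
      have h1 : ψ ∈ S lam ↔ (fun n => ψ (σ n)) ∈
          {ψ | Eig (rr h) ee d lam ψ ∧ ψ (.u 0) = 1} := by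
        show (_ ∧ _ ∧ _) ↔ Eig (rr h) ee d lam (fun n => ψ (σ n)) ∧ ψ (σ (.u 0)) = 1
        rw [← and_assoc, hEig, hσ]
      rw [h1, heq]
      constructor
      · rintro ⟨m, hm, hmψ⟩
        refine ⟨m, hm, funext fun i => ?_⟩
        simpa using congrFun hmψ (σ.symm i)
      · rintro ⟨m, hm, rfl⟩
        exact ⟨m, hm, funext fun n => by simp⟩
  refine ⟨M, S, fun lam => rfl, fun i => ?_, fun i j => ?_, fun lam hlam ψ h0 hψ => ?_,
    fun lam hlam => ?_, fun lam lam' hlam hlam' => ⟨?_, ?_⟩⟩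
  · refine ((row (rr h) ee d (σ.symm i)).support.finite_toSet.image σ).subset fun j hj => ?_
    exact ⟨σ.symm j, by simpa using hj, by simp⟩
  · refine matPow_ne_zero_of_transGen ?_
    have h1 : Relation.TransGen (fun a b => ((M a b : ℕ) : ℝ≥0∞) ≠ 0)
        (σ (σ.symm i)) (σ (σ.symm j)) := by
      refine Relation.TransGen.lift σ (fun a b hab => ?_) _ _
        (row_connected (rr h) he (fun j => (hd j).1) (σ.symm i) (σ.symm j))
      show ((M (σ a) (σ b) : ℕ) : ℝ≥0∞) ≠ 0
      simpa [hM] using hab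
    simpa only [Equiv.apply_symm_apply] using h1
  · have hE := (hEig lam ψ).1 ⟨h0, hψ⟩
    have hz : (fun n => ψ (σ n)) = 0 := by
      rcases le_or_gt lam 0 with h1 | h1
      · exact hE.eq_zero_of_nonpos h1 he fun j => (hd j).1
      · obtain ⟨k, hk⟩ := exists_lt_rr hh h1 hlam
        exact hE.eq_zero_of_lt h1 he (fun j => (hd j).1) hk
    funext i
    simpa using congrFun hz (σ.symm i)
  · have hF := hflow lam hlam
    have h0 : 0 < lam := by linarith
    exact ⟨hF.nonempty, hF.isCompact h0, hF.convex, hF.isClosed_extremePoints h0⟩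
  · rintro ⟨f, -, hf, hcont, -, -, haff⟩
    exact (hflow lam hlam).eq_of_affine (hflow lam' hlam') (by linarith) (by linarith) hf hcont haff
  · rintro rfl
    exact ⟨id, id, Set.bijOn_id _, continuousOn_id, continuousOn_id,
      ⟨fun _ _ => rfl, fun _ _ => rfl⟩, fun _ _ _ _ _ _ _ => rfl⟩

end GraphKMS
end
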